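/- arXiv:2511.01422 — 4 statements merged into one kernel-verified Lean document; each statement's English description precedes it below -/
import Mathlib

section
/- Let T be a set of transpositions of Sym(n) with G(T) unicyclic and triangle-free, and let UG_n = Cay(Sym(n), T). If u1 u2 u3 u4 u1 is a 4-cycle in UG_n, then there exist pairwise distinct indices i, j, k, l ∈ {1,...,n} such that u2 = u1(ij), u3 = u2(kl), u4 = u3(ij), and u1 = u4(kl). -/
/-- Cayley graph of `Sym(n)` with connection set `T`. -/
def cayley {n : ℕ} (T : Set (Equiv.Perm (Fin n))) : SimpleGraph (Equiv.Perm (Fin n)) :=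
  SimpleGraph.fromRel fun g h => g⁻¹ * h ∈ T

/-- Transposition generating graph `G(T)` on `{1,…,n}`. -/
def transGraph {n : ℕ} (T : Set (Equiv.Perm (Fin n))) : SimpleGraph (Fin n) :=
  SimpleGraph.fromRel fun i j => Equiv.swap i j ∈ T

/-- `T` is a set of transpositions. -/
def IsTranspositionSet {n : ℕ} (T : Set (Equiv.Perm (Fin n))) : Prop :=
  ∀ t ∈ T, ∃ i j : Fin n, i ≠ j ∧ t = Equiv.swap i j

/-- A unicyclic graph: connected with exactly one cycle, equivalently
connected with as many edges as vertices. -/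
def IsUnicyclic {V : Type*} [Fintype V] (G : SimpleGraph V) : Prop :=
  G.Connected ∧ G.edgeSet.ncard = Fintype.card V

/-!
The steps `s = u₁⁻¹u₂`, `t = u₂⁻¹u₃`, `s' = u₁⁻¹u₄`, `t' = u₄⁻¹u₃` of a 4-cycle are transpositions
in `T` with `s * t = s' * t'`, `s ≠ t` and `s ≠ s'`. Since `s ≠ s'`, the transposition `t'` moves
every point that is moved by `s` and fixed by `t`. If `s` and `t` are disjoint, this forces `t' = s`
and hence `s' = t`. Otherwise `s = (a b)` and `t = (b c)`, so `t'` moves `a`, and it follows that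
`s'` or `t'` is `(a c)`, which closes a triangle in `G(T)`.
-/

section TranspositionProducts

open Equiv

variable {α : Type*} [DecidableEq α] {s t s' t' : Perm α}

theorem isSwap_inv_eq_self (hs : s.IsSwap) : s⁻¹ = s := by
  obtain ⟨a, b, -, rfl⟩ := hs
  exact swap_inv a b

theorem isSwap_apply_apply (hs : s.IsSwap) (x : α) : s (s x) = x := by
  obtain ⟨a, b, -, rfl⟩ := hs
  exact swap_apply_self a b x

theorem isSwap_eq_swap_apply (hs : s.IsSwap) {x : α} (hx : s x ≠ x) : s = swap x (s x) :=
  hs.isCycle.eq_swap_of_apply_apply_eq_self hx (isSwap_apply_apply hs x)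

theorem isSwap_eq_swap_of_apply_ne (hs : s.IsSwap) {a b : α} (hab : a ≠ b) (ha : s a ≠ a)
    (hb : s b ≠ b) : s = swap a b := by
  have hsa := isSwap_eq_swap_apply hs ha
  rw [hsa] at hb
  obtain hba | hba := eq_or_eq_of_swap_apply_ne_self hb
  · exact absurd hba.symm hab
  · rwa [← hba] at hsa

theorem apply_ne_of_mul_eq_mul (hs : s.IsSwap) (hs' : s'.IsSwap) (hne : s ≠ s')
    (h : s * t = s' * t') {x : α} (hsx : s x ≠ x) (htx : t x = x) : t' x ≠ x := by
  intro ht'x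
  have hss' : s x = s' x := by simpa only [Perm.mul_apply, htx, ht'x] using DFunLike.congr_fun h x
  apply hne
  rw [isSwap_eq_swap_apply hs hsx, isSwap_eq_swap_apply hs' (hss' ▸ hsx), hss']

theorem eq_and_eq_of_disjoint_of_mul_eq_mul (hs : s.IsSwap) (hs' : s'.IsSwap) (ht' : t'.IsSwap)
    (hne : s ≠ s') (hst : s.Disjoint t) (h : s * t = s' * t') : s' = t ∧ t' = s := by
  have ht's : t' = s := by
    have moved {x : α} (hx : s x ≠ x) : t' x ≠ x :=
      apply_ne_of_mul_eq_mul hs hs' hne h hx ((hst x).resolve_left hx)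
    obtain ⟨a, b, hab, rfl⟩ := hs
    exact isSwap_eq_swap_of_apply_ne ht' hab (moved (swap_apply_ne_self_iff.2 ⟨hab, .inl rfl⟩))
      (moved (swap_apply_ne_self_iff.2 ⟨hab, .inr rfl⟩))
  refine ⟨mul_right_cancel (b := s) ?_, ht's⟩
  calc s' * s = s * t := by rw [h, ht's]
    _ = t * s := hst.commute.eq

theorem eq_swap_or_eq_swap_of_mul_eq_mul {a b c : α} (hab : a ≠ b) (hac : a ≠ c) (hbc : b ≠ c)
    (hs' : s'.IsSwap) (ht' : t'.IsSwap) (hne : swap a b ≠ s')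
    (h : swap a b * swap b c = s' * t') : s' = swap a c ∨ t' = swap a c := by
  have ht'a : t' a ≠ a :=
    apply_ne_of_mul_eq_mul ⟨a, b, hab, rfl⟩ hs' hne h (by simpa using hab.symm)
      (swap_apply_of_ne_of_ne hab hac)
  by_cases ht'b : t' b = b
  · right
    have hs'b : s' b = c := by
      simpa [ht'b, swap_apply_of_ne_of_ne hac.symm hbc.symm] using (DFunLike.congr_fun h b).symm
    have hs't'a : s' (t' a) = b := by
      simpa [swap_apply_of_ne_of_ne hab hac] using (DFunLike.congr_fun h a).symm
    have ht'c : t' a = c := by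
      rw [← hs'b, ← hs't'a, isSwap_apply_apply hs']
    rw [isSwap_eq_swap_apply ht' ht'a, ht'c]
  · left
    have ht'ab : t' = swap a b := isSwap_eq_swap_of_apply_ne ht' hab ht'a ht'b
    calc s' = swap a b * swap b c * swap a b := by rw [h, ht'ab, mul_swap_mul_self]
      _ = swap a c := by
        rw [swap_comm a b, swap_comm b c, swap_mul_swap_mul_swap hbc.symm hac.symm]

theorem exists_eq_swap_of_not_disjoint (hs : s.IsSwap) (ht : t.IsSwap) (hne : s ≠ t)
    (hst : ¬ s.Disjoint t) :
    ∃ a b c, a ≠ b ∧ a ≠ c ∧ b ≠ c ∧ s = swap a b ∧ t = swap b c := by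
  simp only [Perm.Disjoint, not_forall, not_or] at hst
  obtain ⟨b, hsb, htb⟩ := hst
  have hs_eq : s = swap (s b) b := (isSwap_eq_swap_apply hs hsb).trans (swap_comm b (s b))
  have ht_eq : t = swap b (t b) := isSwap_eq_swap_apply ht htb
  refine ⟨s b, b, t b, hsb, fun hab ↦ hne ?_, Ne.symm htb, hs_eq, ht_eq⟩
  rw [hs_eq, ht_eq, hab, swap_comm]

theorem disjoint_of_cliqueFree_three_of_mul_eq_mul {T : Set (Perm α)} (hT : ∀ r ∈ T, r.IsSwap)
    (htri : (SimpleGraph.fromRel fun i j ↦ swap i j ∈ T).CliqueFree 3)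
    (hs : s ∈ T) (ht : t ∈ T) (hs' : s' ∈ T) (ht' : t' ∈ T) (hst : s ≠ t) (hss' : s ≠ s')
    (h : s * t = s' * t') : s.Disjoint t := by
  by_contra hdisj
  obtain ⟨a, b, c, hab, hac, hbc, rfl, rfl⟩ :=
    exists_eq_swap_of_not_disjoint (hT s hs) (hT t ht) hst hdisj
  have hacT : swap a c ∈ T := by
    obtain rfl | rfl :=
      eq_swap_or_eq_swap_of_mul_eq_mul hab hac hbc (hT s' hs') (hT t' ht') hss' h
    · exact hs'
    · exact ht'
  exact htri {a, b, c} (SimpleGraph.is3Clique_triple_iff.2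
    ⟨⟨hab, .inl hs⟩, ⟨hac, .inl hacT⟩, ⟨hbc, .inl ht⟩⟩)

theorem pairwise_ne_of_disjoint_swap {i j k l : α} (hij : i ≠ j) (hkl : k ≠ l)
    (h : (swap i j).Disjoint (swap k l)) : [i, j, k, l].Pairwise (· ≠ ·) := by
  have hi := (h i).resolve_left (swap_apply_ne_self_iff.2 ⟨hij, .inl rfl⟩)
  have hj := (h j).resolve_left (swap_apply_ne_self_iff.2 ⟨hij, .inr rfl⟩)
  grind

end TranspositionProducts

section CayleyGraphs

open Equiv

theorem exists_mem_eq_mul_of_mulCayley_adj {G : Type*} [Group G] {T : Set G}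
    (hT : ∀ t ∈ T, t⁻¹ ∈ T) {u v : G} (h : (SimpleGraph.mulCayley T).Adj u v) :
    ∃ t ∈ T, v = u * t := by
  obtain ⟨-, t, ht, rfl | rfl⟩ := (SimpleGraph.mulCayley_adj' T u v).1 h
  · exact ⟨t, ht, rfl⟩
  · exact ⟨t⁻¹, hT t ht, (mul_inv_cancel_right v t).symm⟩

theorem cayley_eq_mulCayley {n : ℕ} (T : Set (Perm (Fin n))) :
    cayley T = SimpleGraph.mulCayley T := by
  ext u v
  rw [cayley, SimpleGraph.fromRel_adj, SimpleGraph.mulCayley_adj]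

theorem stmt_3_general {α : Type*} [DecidableEq α] {T : Set (Perm α)} (hT : ∀ t ∈ T, t.IsSwap)
    (htri : (SimpleGraph.fromRel fun i j ↦ swap i j ∈ T).CliqueFree 3)
    {u₁ u₂ u₃ u₄ : Perm α} (h₁₃ : u₁ ≠ u₃) (h₂₄ : u₂ ≠ u₄)
    (h₁₂ : (SimpleGraph.mulCayley T).Adj u₁ u₂) (h₂₃ : (SimpleGraph.mulCayley T).Adj u₂ u₃)
    (h₃₄ : (SimpleGraph.mulCayley T).Adj u₃ u₄) (h₄₁ : (SimpleGraph.mulCayley T).Adj u₄ u₁) :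
    ∃ i j k l : α, [i, j, k, l].Pairwise (· ≠ ·) ∧
      u₂ = u₁ * swap i j ∧ u₃ = u₂ * swap k l ∧ u₄ = u₃ * swap i j ∧ u₁ = u₄ * swap k l := by
  have hinv : ∀ t ∈ T, t⁻¹ = t := fun t ht ↦ isSwap_inv_eq_self (hT t ht)
  have step {u v : Perm α} (h : (SimpleGraph.mulCayley T).Adj u v) : ∃ t ∈ T, v = u * t :=
    exists_mem_eq_mul_of_mulCayley_adj (fun t ht ↦ (hinv t ht).symm ▸ ht) h
  obtain ⟨s, hs, hu₂⟩ := step h₁₂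
  obtain ⟨t, ht, hu₃⟩ := step h₂₃
  obtain ⟨t', ht', hu₃'⟩ := step h₃₄.symm
  obtain ⟨s', hs', hu₄⟩ := step h₄₁.symm
  have hmul : s * t = s' * t' := mul_left_cancel (a := u₁) <| by
    rw [← mul_assoc, ← mul_assoc, ← hu₂, ← hu₄, ← hu₃, ← hu₃']
  have hst : s ≠ t := by
    rintro rfl
    exact h₁₃ (by rw [hu₃, hu₂, mul_assoc, mul_eq_one_iff_eq_inv.2 (hinv s hs).symm, mul_one])
  have hss' : s ≠ s' := by
    rintro rfl
    exact h₂₄ (hu₂.trans hu₄.symm)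
  have hdisj := disjoint_of_cliqueFree_three_of_mul_eq_mul hT htri hs ht hs' ht' hst hss' hmul
  obtain ⟨rfl, rfl⟩ :=
    eq_and_eq_of_disjoint_of_mul_eq_mul (hT s hs) (hT s' hs') (hT t' ht') hss' hdisj hmul
  obtain ⟨i, j, hij, rfl⟩ := hT _ hs
  obtain ⟨k, l, hkl, rfl⟩ := hT _ ht
  exact ⟨i, j, k, l, pairwise_ne_of_disjoint_swap hij hkl hdisj, hu₂, hu₃,
    by rw [hu₃', mul_swap_mul_self], by rw [hu₄, mul_swap_mul_self]⟩

end CayleyGraphs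

theorem stmt_3 {n : ℕ} (T : Set (Equiv.Perm (Fin n)))
    (hT : IsTranspositionSet T) (huni : IsUnicyclic (transGraph T))
    (htri : (transGraph T).CliqueFree 3)
    (u1 u2 u3 u4 : Equiv.Perm (Fin n))
    (hdist : [u1, u2, u3, u4].Pairwise (· ≠ ·))
    (h12 : (cayley T).Adj u1 u2) (h23 : (cayley T).Adj u2 u3)
    (h34 : (cayley T).Adj u3 u4) (h41 : (cayley T).Adj u4 u1) :
    ∃ i j k l : Fin n, [i, j, k, l].Pairwise (· ≠ ·) ∧
      u2 = u1 * Equiv.swap i j ∧ u3 = u2 * Equiv.swap k l ∧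
      u4 = u3 * Equiv.swap i j ∧ u1 = u4 * Equiv.swap k l := by
  rw [cayley_eq_mulCayley] at h12 h23 h34 h41
  exact stmt_3_general hT htri (show u1 ≠ u3 by grind) (show u2 ≠ u4 by grind) h12 h23 h34 h41
end

section
/- Let F ⊆ V(MB_4) with |F| ≤ 5. If MB_4 − F is disconnected, then MB_4 − F has exactly two connected components, one of which is an isolated vertex. -/
/-- The modified bubble-sort graph: the Cayley graph of `Sym(n)` generated by the
transpositions `(12),(23),…,((n-1)n),(n1)` (positions taken mod `n`). -/
def MB (n : ℕ) : SimpleGraph (Equiv.Perm (Fin n)) :=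
  SimpleGraph.fromRel fun g h =>
    ∃ i : Fin n, h = g * Equiv.swap i ⟨(i.val + 1) % n, Nat.mod_lt _ i.pos⟩

/-!
Split `MB 4` into the four layers `{g | g 3 = a}`; the transpositions `(01)` and `(12)` make each
of them a hexagon, and any two layers are joined by four disjoint edges. A layer with at most one
fault is good. The survivors of a good layer form a path or a hexagon, and at most two of the four
edges between two good layers are destroyed, so all survivors of good layers lie in one
component `C`.

Let `B` be the set of bad layers. The neighbours of a vertex lie in three different layers, and
the neighbours of a survivor outside `C` that lie in good layers are faults; there are at least
`3 - |B|` of them. Two adjacent vertices have disjoint neighbourhoods, so two adjacent survivors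
outside `C` would give `2 (3 - |B|)` faults in good layers, while there are at most `5 - 2 |B|`.
Hence all neighbours of a survivor outside `C` are faults, and since two vertices have together at
least six neighbours, there is at most one such survivor.
-/

open Equiv
open scoped Finset

section Graph

variable {V : Type*} {G : SimpleGraph V}

lemma reachable_induce_of_adj_succ {s : Set V} {c : ℕ → V} (hadj : ∀ k, G.Adj (c k) (c (k + 1)))
    {m n : ℕ} (hmn : m ≤ n) (hc : ∀ k, m ≤ k → k ≤ n → c k ∈ s) :
    (G.induce s).Reachable ⟨c m, hc m le_rfl hmn⟩ ⟨c n, hc n hmn le_rfl⟩ := by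
  induction n, hmn using Nat.le_induction with
  | base => rfl
  | succ n hmn ih =>
    have hlast : (G.induce s).Adj ⟨c n, hc n hmn n.le_succ⟩ ⟨c (n + 1), hc _ (by omega) le_rfl⟩ :=
      hadj n
    exact (ih fun k hmk hkn => hc k hmk (by omega)).trans hlast.reachable

lemma exists_two_components_of_compl_supp_subsingleton (hG : ¬ G.Preconnected)
    (C₁ : G.ConnectedComponent) (hC₁ : C₁.suppᶜ.Subsingleton) :
    ∃ C₂ : G.ConnectedComponent, C₁ ≠ C₂ ∧
      (∀ C : G.ConnectedComponent, C = C₁ ∨ C = C₂) ∧ C₂.supp.ncard = 1 := by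
  obtain ⟨v, hv⟩ : ∃ v, v ∉ C₁.supp := by
    by_contra! hall
    exact hG fun x y => C₁.reachable_of_mem_supp (hall x) (hall y)
  have eq_of_notMem {w : V} (hw : w ∉ C₁.supp) : w = v := hC₁ hw hv
  refine ⟨G.connectedComponentMk v, fun h => hv h.symm, fun C => ?_, ?_⟩
  · induction C using SimpleGraph.ConnectedComponent.ind with | _ w =>
    by_cases hw : w ∈ C₁.supp
    · exact .inl hw
    · exact .inr (congrArg _ (eq_of_notMem hw))
  · refine Set.ncard_eq_one.2 ⟨v, Set.eq_singleton_iff_unique_mem.2 ⟨rfl, fun w hw => ?_⟩⟩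
    have hwv : G.Reachable w v := SimpleGraph.ConnectedComponent.exact hw
    refine eq_of_notMem fun hw₁ => hv ?_
    exact (SimpleGraph.ConnectedComponent.sound hwv).symm.trans hw₁

end Graph

section Counting

variable {α β : Type*} [DecidableEq β]

lemma card_image_le_card_add_card_filter_notMem (s : Finset α) (t : Finset β) (f : α → β) :
    #(s.image f) ≤ #t + #{x ∈ s | f x ∉ t} := by
  calc #(s.image f) ≤ #(t ∪ {x ∈ s | f x ∉ t}.image f) := Finset.card_le_card (by grind)
    _ ≤ #t + #({x ∈ s | f x ∉ t}.image f) := Finset.card_union_le _ _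
    _ ≤ #t + #{x ∈ s | f x ∉ t} := by gcongr; exact Finset.card_image_le

lemma mul_card_add_card_filter_notMem_le_card {s : Finset α} {t : Finset β} {f : α → β} {m : ℕ}
    (hm : ∀ b ∈ t, m ≤ #{x ∈ s | f x = b}) :
    m * #t + #{x ∈ s | f x ∉ t} ≤ #s := by
  have hfiber : m * #t ≤ #{x ∈ s | f x ∈ t} := by
    have hmaps : ∀ x ∈ {x ∈ s | f x ∈ t}, f x ∈ t := fun x hx => (Finset.mem_filter.1 hx).2
    refine Finset.mul_card_image_le_card_of_maps_to hmaps m fun b hb =>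
      (hm b hb).trans (Finset.card_le_card ?_)
    grind
  have hsplit := Finset.card_filter_add_card_filter_not (s := s) (fun x => f x ∈ t)
  omega

end Counting

namespace MB

section Neighbors

variable {n : ℕ}

lemma adj_mul_swap (g : Perm (Fin (n + 2))) (i : Fin (n + 2)) :
    (MB (n + 2)).Adj g (g * swap i (i + 1)) := by
  refine (SimpleGraph.fromRel_adj _ _ _).2 ⟨?_, .inl ⟨i, rfl⟩⟩
  simp [swap_eq_one_iff]

/-- The neighbours of `g` in `MB (n + 2)`, as a set over which one can compute. -/
def neighbors (g : Perm (Fin (n + 2))) : Finset (Perm (Fin (n + 2))) :=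
  Finset.univ.image fun i => g * swap i (i + 1)

lemma adj_of_mem_neighbors {g h : Perm (Fin (n + 2))} (hh : h ∈ neighbors g) :
    (MB (n + 2)).Adj g h := by
  obtain ⟨i, -, rfl⟩ := Finset.mem_image.1 hh
  exact adj_mul_swap g i

lemma sign_of_mem_neighbors {g h : Perm (Fin (n + 2))} (hh : h ∈ neighbors g) :
    Perm.sign h = -Perm.sign g := by
  obtain ⟨i, -, rfl⟩ := Finset.mem_image.1 hh
  simp [Perm.sign_swap']

lemma disjoint_neighbors {g h : Perm (Fin (n + 2))} (hh : h ∈ neighbors g) :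
    Disjoint (neighbors g) (neighbors h) := by
  refine Finset.disjoint_left.2 fun u hug huh => ?_
  have hsign : -Perm.sign g = Perm.sign g := by
    rw [← sign_of_mem_neighbors hug, sign_of_mem_neighbors huh, sign_of_mem_neighbors hh, neg_neg]
  exact neg_units_ne_self _ hsign

end Neighbors

lemma card_image_neighbors_apply_three (g : Perm (Fin 4)) :
    #((neighbors g).image fun h => h 3) = 3 := by
  revert g; decide +kernel

lemma six_le_card_neighbors_union {g h : Perm (Fin 4)} (hgh : g ≠ h) :
    6 ≤ #(neighbors g ∪ neighbors h) := by
  revert g h; decide +kernel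

/-- The alternating words `1, (01), (01)(12), (01)(12)(01), …`. Multiplied by `g` on the left, they
run around the hexagon `{h | h 3 = g 3}`. -/
def alternatingWord : ℕ → Perm (Fin 4)
  | 0 => 1
  | k + 1 => alternatingWord k * if Even k then swap 0 1 else swap 1 2

lemma adj_mul_alternatingWord_succ (g : Perm (Fin 4)) (k : ℕ) :
    (MB 4).Adj (g * alternatingWord k) (g * alternatingWord (k + 1)) := by
  rw [alternatingWord, ← mul_assoc]
  split_ifs
  · exact adj_mul_swap _ 0
  · exact adj_mul_swap _ 1

lemma alternatingWord_apply_three (k : ℕ) : alternatingWord k 3 = 3 := by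
  induction k with
  | zero => rfl
  | succ k ih =>
    have hfix : (if Even k then swap 0 1 else swap 1 2 : Perm (Fin 4)) 3 = 3 := by
      split_ifs <;> decide
    rw [alternatingWord, Perm.mul_apply, hfix, ih]

lemma alternatingWord_ne_one {k : ℕ} (hk₁ : 1 ≤ k) (hk₅ : k ≤ 5) : alternatingWord k ≠ 1 := by
  interval_cases k <;> decide

lemma exists_mul_alternatingWord_eq {g h : Perm (Fin 4)} (hgh : h 3 = g 3) :
    ∃ k ≤ 5, g * alternatingWord k = h := by
  have hword : ∀ u : Perm (Fin 4), u 3 = 3 → ∃ k ≤ 5, alternatingWord k = u := by decide +kernel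
  obtain ⟨k, hk, hku⟩ := hword (g⁻¹ * h) (by simp [hgh])
  exact ⟨k, hk, by simp [hku]⟩

variable {F : Finset (Perm (Fin 4))}

/-- The faults in the layer `{g | g 3 = a}`. -/
def faults (F : Finset (Perm (Fin 4))) (a : Fin 4) : Finset (Perm (Fin 4)) :=
  {g ∈ F | g 3 = a}

/-- The layers containing at least two faults. -/
def badLayers (F : Finset (Perm (Fin 4))) : Finset (Fin 4) := {a | 2 ≤ #(faults F a)}

lemma card_faults_le_one {a : Fin 4} (ha : a ∉ badLayers F) : #(faults F a) ≤ 1 := by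
  simpa [badLayers, Nat.lt_succ_iff] using ha

lemma two_mul_card_badLayers_add_le (F : Finset (Perm (Fin 4))) :
    2 * #(badLayers F) + #{g ∈ F | g 3 ∉ badLayers F} ≤ #F :=
  mul_card_add_card_filter_notMem_le_card fun _ ha => (Finset.mem_filter.1 ha).2

lemma reachable_of_unique_layer_fault {f g : Perm (Fin 4)} (hf : ∀ u ∈ F, u 3 = f 3 → u = f)
    (hf' : f * alternatingWord 1 ∉ F) (hg : g ∉ F) (hgf : g 3 = f 3) :
    ((MB 4).induce (F : Set (Perm (Fin 4)))ᶜ).Reachable ⟨f * alternatingWord 1, hf'⟩ ⟨g, hg⟩ := by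
  obtain ⟨k, hk, rfl⟩ := exists_mul_alternatingWord_eq hgf
  rcases k.eq_zero_or_pos with rfl | hk₀
  · exact SimpleGraph.Adj.reachable (adj_mul_alternatingWord_succ f 0).symm
  · refine reachable_induce_of_adj_succ (s := (F : Set (Perm (Fin 4)))ᶜ)
      (adj_mul_alternatingWord_succ f) hk₀ fun j hj hjk hjF => ?_
    refine alternatingWord_ne_one hj (hjk.trans hk) (mul_eq_left.1 (hf _ hjF ?_))
    rw [Perm.mul_apply, alternatingWord_apply_three]

lemma reachable_of_apply_three_eq {g h : Perm (Fin 4)} (hg : g ∉ F) (hh : h ∉ F) (hgh : g 3 = h 3)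
    (hgood : g 3 ∉ badLayers F) :
    ((MB 4).induce (F : Set (Perm (Fin 4)))ᶜ).Reachable ⟨g, hg⟩ ⟨h, hh⟩ := by
  obtain ⟨f, hf₃, hf⟩ : ∃ f : Perm (Fin 4), f 3 = g 3 ∧ ∀ u ∈ F, u 3 = f 3 → u = f := by
    obtain ⟨f, hf⟩ := Finset.card_le_one_iff_subset_singleton.1 (card_faults_le_one hgood)
    rcases Finset.subset_singleton_iff.1 hf with hempty | hsingle
    · refine ⟨g, rfl, fun u hu hug => absurd ?_ (Finset.eq_empty_iff_forall_notMem.1 hempty u)⟩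
      exact Finset.mem_filter.2 ⟨hu, hug⟩
    · have hf₃ : f 3 = g 3 := by
        have hfmem : f ∈ faults F (g 3) := hsingle ▸ Finset.mem_singleton_self f
        exact (Finset.mem_filter.1 hfmem).2
      refine ⟨f, hf₃, fun u hu huf => Finset.mem_singleton.1 (hf ?_)⟩
      exact Finset.mem_filter.2 ⟨hu, huf.trans hf₃⟩
  have hf' : f * alternatingWord 1 ∉ F := fun hmem =>
    alternatingWord_ne_one le_rfl (by norm_num) <| mul_eq_left.1 <|
      hf _ hmem (by rw [Perm.mul_apply, alternatingWord_apply_three])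
  exact (reachable_of_unique_layer_fault hf hf' hg hf₃.symm).symm.trans
    (reachable_of_unique_layer_fault hf hf' hh (hgh.symm.trans hf₃.symm))

lemma exists_adj_between_good_layers {a b : Fin 4} (hab : a ≠ b) (ha : a ∉ badLayers F)
    (hb : b ∉ badLayers F) :
    ∃ g h : Perm (Fin 4), (MB 4).Adj g h ∧ (g ∉ F ∧ g 3 = a) ∧ (h ∉ F ∧ h 3 = b) := by
  obtain ⟨f, hf⟩ := Finset.card_le_one_iff_subset_singleton.1 (card_faults_le_one ha)
  obtain ⟨f', hf'⟩ := Finset.card_le_one_iff_subset_singleton.1 (card_faults_le_one hb)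
  -- The edges between the layers are `g — g * swap j 3` with `g 3 = a`, `g j = b`, `j ∈ {0, 2}`.
  let ends : Finset (Perm (Fin 4)) := {g | g 3 = a ∧ (g 0 = b ∨ g 2 = b)}
  have hends : #ends = 4 := by clear hf hf' ha hb; revert a b; decide +kernel
  obtain ⟨g, hg, hgf⟩ : ∃ g ∈ ends, g ∉ ({f, f' * swap 0 3, f' * swap 2 3} : Finset _) :=
    Finset.exists_mem_notMem_of_card_lt_card (Finset.card_le_three.trans_lt (by omega))
  simp only [Finset.mem_insert, Finset.mem_singleton, not_or] at hgf
  obtain ⟨-, hg₃, hgb⟩ := Finset.mem_filter.1 hg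
  have hgF : g ∉ F := fun hgF =>
    hgf.1 (Finset.mem_singleton.1 (hf (Finset.mem_filter.2 ⟨hgF, hg₃⟩)))
  have hcross (j : Fin 4) (hgj : g j = b) (hne : g ≠ f' * swap j 3) :
      g * swap j 3 ∉ F ∧ (g * swap j 3) 3 = b := by
    have hlayer : (g * swap j 3) 3 = b := by simp [hgj]
    refine ⟨fun hmem => hne ?_, hlayer⟩
    rw [← Finset.mem_singleton.1 (hf' (Finset.mem_filter.2 ⟨hmem, hlayer⟩)), mul_assoc,
      swap_mul_self, mul_one]
  rcases hgb with hg₀ | hg₂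
  · exact ⟨g, _, swap_comm (0 : Fin 4) 3 ▸ adj_mul_swap g 3, ⟨hgF, hg₃⟩, hcross 0 hg₀ hgf.2.1⟩
  · exact ⟨g, _, adj_mul_swap g 2, ⟨hgF, hg₃⟩, hcross 2 hg₂ hgf.2.2⟩

lemma reachable_of_good_layers {g h : Perm (Fin 4)} (hg : g ∉ F) (hh : h ∉ F)
    (hg₃ : g 3 ∉ badLayers F) (hh₃ : h 3 ∉ badLayers F) :
    ((MB 4).induce (F : Set (Perm (Fin 4)))ᶜ).Reachable ⟨g, hg⟩ ⟨h, hh⟩ := by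
  by_cases hgh : g 3 = h 3
  · exact reachable_of_apply_three_eq hg hh hgh hg₃
  obtain ⟨u, v, huv, ⟨hu, hu₃⟩, hv, hv₃⟩ := exists_adj_between_good_layers hgh hg₃ hh₃
  have hcross : ((MB 4).induce (F : Set (Perm (Fin 4)))ᶜ).Adj ⟨u, hu⟩ ⟨v, hv⟩ := huv
  exact (reachable_of_apply_three_eq hg hu hu₃.symm hg₃).trans <|
    hcross.reachable.trans <| reachable_of_apply_three_eq hv hh hv₃ (hv₃ ▸ hh₃)

lemma exists_component_containing_good_layers (hF : #F ≤ 5) :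
    ∃ C : ((MB 4).induce (F : Set (Perm (Fin 4)))ᶜ).ConnectedComponent,
      ∀ x, x.1 3 ∉ badLayers F → x ∈ C.supp := by
  obtain ⟨a, -, ha⟩ : ∃ a ∈ (Finset.univ : Finset (Fin 4)), a ∉ badLayers F := by
    refine Finset.exists_mem_notMem_of_card_lt_card ?_
    have := two_mul_card_badLayers_add_le F
    simp only [Finset.card_univ, Fintype.card_fin]
    omega
  have hlayer : #{g : Perm (Fin 4) | g 3 = a} = 6 := by clear ha; revert a; decide +kernel
  obtain ⟨g, hga, hg⟩ : ∃ g ∈ ({g | g 3 = a} : Finset (Perm (Fin 4))), g ∉ F :=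
    Finset.exists_mem_notMem_of_card_lt_card (by omega)
  obtain rfl : g 3 = a := (Finset.mem_filter.1 hga).2
  exact ⟨SimpleGraph.connectedComponentMk _ ⟨g, hg⟩, fun x hx =>
    SimpleGraph.ConnectedComponent.sound (reachable_of_good_layers x.2 hg hx ha)⟩

section Component

variable {C : ((MB 4).induce (F : Set (Perm (Fin 4)))ᶜ).ConnectedComponent}

lemma notMem_supp_of_mem_neighbors {v w : ↥(F : Set (Perm (Fin 4)))ᶜ} (hv : v ∉ C.supp)
    (hvw : w.1 ∈ neighbors v.1) : w ∉ C.supp := by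
  have hadj : ((MB 4).induce (F : Set (Perm (Fin 4)))ᶜ).Adj v w := adj_of_mem_neighbors hvw
  rwa [← C.mem_supp_congr_adj hadj]

variable (hC : ∀ x, x.1 3 ∉ badLayers F → x ∈ C.supp)
include hC

lemma good_neighbors_subset_faults {v : ↥(F : Set (Perm (Fin 4)))ᶜ} (hv : v ∉ C.supp) :
    {u ∈ neighbors v.1 | u 3 ∉ badLayers F} ⊆ {u ∈ F | u 3 ∉ badLayers F} := by
  intro u hu
  obtain ⟨huv, hu₃⟩ := Finset.mem_filter.1 hu
  refine Finset.mem_filter.2 ⟨?_, hu₃⟩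
  by_contra huF
  exact notMem_supp_of_mem_neighbors (w := ⟨u, huF⟩) hv huv (hC _ hu₃)

lemma notMem_neighbors_of_notMem_supp (hF : #F ≤ 5) {v w : ↥(F : Set (Perm (Fin 4)))ᶜ}
    (hv : v ∉ C.supp) (hw : w ∉ C.supp) : w.1 ∉ neighbors v.1 := by
  intro hvw
  have hdisj : Disjoint {u ∈ neighbors v.1 | u 3 ∉ badLayers F}
      {u ∈ neighbors w.1 | u 3 ∉ badLayers F} :=
    Finset.disjoint_filter_filter (disjoint_neighbors hvw)
  have hunion := Finset.card_le_card <| Finset.union_subset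
    (good_neighbors_subset_faults hC hv) (good_neighbors_subset_faults hC hw)
  rw [Finset.card_union_of_disjoint hdisj] at hunion
  have hlayers (g : Perm (Fin 4)) :
      3 ≤ #(badLayers F) + #{u ∈ neighbors g | u 3 ∉ badLayers F} :=
    card_image_neighbors_apply_three g ▸ card_image_le_card_add_card_filter_notMem _ _ _
  linarith [hlayers v, hlayers w, two_mul_card_badLayers_add_le F]

lemma neighbors_subset_of_notMem_supp (hF : #F ≤ 5) {v : ↥(F : Set (Perm (Fin 4)))ᶜ}
    (hv : v ∉ C.supp) : neighbors v.1 ⊆ F := by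
  intro u huv
  by_contra huF
  exact notMem_neighbors_of_notMem_supp hC hF (w := ⟨u, huF⟩) hv
    (notMem_supp_of_mem_neighbors hv huv) huv

lemma compl_supp_subsingleton (hF : #F ≤ 5) : C.suppᶜ.Subsingleton := by
  intro v hv w hw
  by_contra hvw
  have hsub : neighbors v.1 ∪ neighbors w.1 ⊆ F :=
    Finset.union_subset (neighbors_subset_of_notMem_supp hC hF hv)
      (neighbors_subset_of_notMem_supp hC hF hw)
  have hsix := six_le_card_neighbors_union (Subtype.coe_injective.ne hvw)
  have := Finset.card_le_card hsub
  omega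

end Component

end MB

theorem stmt_12 (F : Set (Equiv.Perm (Fin 4))) (hF : F.ncard ≤ 5)
    (hdisc : ¬ ((MB 4).induce Fᶜ).Preconnected) :
    ∃ C₁ C₂ : ((MB 4).induce Fᶜ).ConnectedComponent, C₁ ≠ C₂ ∧
      (∀ C : ((MB 4).induce Fᶜ).ConnectedComponent, C = C₁ ∨ C = C₂) ∧
      C₂.supp.ncard = 1 := by
  lift F to Finset (Perm (Fin 4)) using F.toFinite
  rw [Set.ncard_coe_finset] at hF
  obtain ⟨C₁, hgood⟩ := MB.exists_component_containing_good_layers hF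
  exact ⟨C₁, exists_two_components_of_compl_supp_subsingleton hdisc C₁
    (MB.compl_supp_subsingleton hgood hF)⟩
end

section
/- Let F ⊆ V(MB_4) with |F| ≤ 6. If MB_4 − F is disconnected, then MB_4 − F has a connected component C with |V(C)| ≥ 24 − |F| − 2. -/
/-!
The cosets of `⟨(12), (34)⟩` and of `⟨(23), (14)⟩` span 4-cycles of `MB_4`, six of each kind, and
every vertex is the only common vertex of one 4-cycle of each kind. This identifies the vertices
with the edges of a 4-regular bipartite graph `W` whose nodes are the twelve 4-cycles: a cyclic
arrangement of six layers of two nodes, with all edges between consecutive layers. The faults become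
the edges of a subgraph `H` of `W` with at most six edges.

A 4-cycle with at most one fault stays connected. Call its node light, and the nodes of degree at
least two in `H` heavy. Counting faults layer by layer shows that the light nodes are connected to
each other through edges of `W` outside `H`, so all surviving vertices on a light 4-cycle lie in one
component. The other surviving vertices are edges of `W` outside `H` between two heavy nodes, and
inclusion-exclusion on the degrees in `H` leaves room for at most two of them.
-/

open Finset Equiv

theorem sum_fin_two_eq_add_succ {M : Type*} [AddCommMonoid M] (f : Fin 2 → M) (a : Fin 2) :
    ∑ i, f i = f a + f (a + 1) := by
  fin_cases a <;> simp [add_comm]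

section General

variable {V : Type*} {G H : SimpleGraph V}

theorem adjMatrix_apply_comm [DecidableRel H.Adj] (v w : V) :
    H.adjMatrix ℕ v w = H.adjMatrix ℕ w v :=
  H.isSymm_adjMatrix.apply w v

theorem adjMatrix_le_one [DecidableRel H.Adj] (v w : V) : H.adjMatrix ℕ v w ≤ 1 := by
  rw [SimpleGraph.adjMatrix_apply]
  split_ifs <;> simp

theorem adjMatrix_le_degree [Fintype V] [DecidableRel H.Adj] (v w : V) :
    H.adjMatrix ℕ v w ≤ H.degree v := by
  rw [SimpleGraph.adjMatrix_apply]
  split_ifs with h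
  · exact (SimpleGraph.degree_pos_iff_exists_adj H v).2 ⟨w, h⟩
  · exact Nat.zero_le _

theorem eq_of_adj_of_degree_le_one {v w w' : V} [Fintype (H.neighborSet v)]
    (hv : H.degree v ≤ 1) (hw : H.Adj v w) (hw' : H.Adj v w') : w = w' := by
  rw [← SimpleGraph.card_neighborFinset_eq_degree] at hv
  exact card_le_one.1 hv w (by simpa using hw) w' (by simpa using hw')

theorem reachable_induce_compl_of_square {F : Set V} {a b u v : V} (ha : a ∉ F) (hb : b ∉ F)
    (hau : G.Adj a u) (hub : G.Adj u b) (hav : G.Adj a v) (hvb : G.Adj v b)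
    (huv : u ∉ F ∨ v ∉ F) : (G.induce Fᶜ).Reachable ⟨a, ha⟩ ⟨b, hb⟩ := by
  have hpath {w} (hw : w ∉ F) (haw : G.Adj a w) (hwb : G.Adj w b) :
      (G.induce Fᶜ).Reachable ⟨a, ha⟩ ⟨b, hb⟩ :=
    .trans (v := ⟨w, hw⟩) (SimpleGraph.induce_adj.2 haw).reachable
      (SimpleGraph.induce_adj.2 hwb).reachable
  exact huv.elim (hpath · hau hub) (hpath · hav hvb)

theorem card_interedges_sdiff [DecidableRel G.Adj] [DecidableRel H.Adj] (hH : H ≤ G)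
    (K L : Finset V) :
    #((G \ H).interedges K L) + #(H.interedges K L) = #(G.interedges K L) := by
  classical
  rw [← card_union_of_disjoint]
  · congr 1
    ext ⟨v, w⟩
    have := @hH v w
    simp only [mem_union, SimpleGraph.mk_mem_interedges_iff, SimpleGraph.sdiff_adj]
    tauto
  · rw [disjoint_left]
    simp +contextual [SimpleGraph.mem_interedges_iff]

variable [Fintype V] [DecidableRel G.Adj] {s t K L : Finset V}

theorem card_interedges_eq_sum_degree (h : G.IsBipartiteWith ↑s ↑t) (hK : K ⊆ s) :
    #(G.interedges K t) = ∑ v ∈ K, G.degree v := by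
  rw [SimpleGraph.interedges_def, card_filter, sum_product]
  refine sum_congr rfl fun v hv => ?_
  rw [← card_filter, ← SimpleGraph.card_neighborFinset_eq_degree,
    SimpleGraph.isBipartiteWith_neighborFinset h (hK hv)]

theorem sum_degree_add_sum_degree_le (h : G.IsBipartiteWith ↑s ↑t) (hK : K ⊆ s) (hL : L ⊆ t) :
    ∑ v ∈ K, G.degree v + ∑ v ∈ L, G.degree v ≤ #G.edgeFinset + #(G.interedges K L) := by
  -- Inclusion-exclusion for the edges meeting `K` and the edges meeting `L`.
  classical
  have : Std.Symm G.Adj := G.symm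
  rw [← card_interedges_eq_sum_degree h hK, ← card_interedges_eq_sum_degree h.symm hL,
    ← SimpleGraph.isBipartiteWith_sum_degrees_eq_card_edges h,
    ← card_interedges_eq_sum_degree h subset_rfl,
    show #(G.interedges L s) = #(G.interedges s L) from Rel.card_interedges_comm (r := G.Adj) _ _,
    ← card_union_add_card_inter]
  gcongr
  · exact union_subset (SimpleGraph.interedges_mono _ hK subset_rfl)
      (SimpleGraph.interedges_mono _ subset_rfl hL)
  · intro e
    simp only [mem_inter, SimpleGraph.mem_interedges_iff]
    tauto

end General

/-- The wreath graph `W(6, 2)`, in which `(t, 0)` and `(t, 1)` form layer `t` and two nodes are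
adjacent when their layers are consecutive modulo `6`. Its edges encode the vertices of `MB_4`. -/
def wreathGraph : SimpleGraph (Fin 6 × Fin 2) :=
  (SimpleGraph.cycleGraph 6).comap Prod.fst

theorem wreathGraph_adj_iff {p q : Fin 6 × Fin 2} :
    wreathGraph.Adj p q ↔ q.1 = p.1 + 1 ∨ q.1 = p.1 - 1 := by
  rw [wreathGraph, SimpleGraph.comap_adj, SimpleGraph.cycleGraph_adj, or_comm]
  grind

instance : DecidableRel wreathGraph.Adj := fun _ _ => decidable_of_iff _ wreathGraph_adj_iff.symm

theorem wreathGraph_adj_next (t : Fin 6) (a b : Fin 2) : wreathGraph.Adj (t, a) (t + 1, b) :=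
  wreathGraph_adj_iff.2 (.inl rfl)

theorem wreathGraph_adj_prev (t : Fin 6) (a b : Fin 2) : wreathGraph.Adj (t, a) (t - 1, b) :=
  wreathGraph_adj_iff.2 (.inr rfl)

theorem wreathGraph_adj_add {ε : Fin 6} (hε : ε = 1 ∨ ε = -1) (t : Fin 6) (a b : Fin 2) :
    wreathGraph.Adj (t, a) (t + ε, b) := by
  rcases hε with rfl | rfl
  · exact wreathGraph_adj_next t a b
  · exact sub_eq_add_neg t 1 ▸ wreathGraph_adj_prev t a b

section FaultGraph

variable {H : SimpleGraph (Fin 6 × Fin 2)} [DecidableRel H.Adj]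

theorem degree_eq_sum_add_sum (hH : H ≤ wreathGraph) {ε : Fin 6} (hε : ε = 1 ∨ ε = -1)
    (t : Fin 6) (a : Fin 2) :
    H.degree (t, a) =
      ∑ b, H.adjMatrix ℕ (t, a) (t + ε, b) + ∑ b, H.adjMatrix ℕ (t, a) (t - ε, b) := by
  rw [← Nat.cast_id (H.degree _), SimpleGraph.degree_eq_sum_if_adj, Fintype.sum_prod_type]
  simp only [SimpleGraph.adjMatrix_apply]
  refine Fintype.sum_eq_add (t + ε) (t - ε) ?_ fun s hs => ?_
  · revert t; rcases hε with rfl | rfl <;> decide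
  · refine sum_eq_zero fun b _ => if_neg fun hab => ?_
    have := wreathGraph_adj_iff.1 (hH hab)
    rcases hε with rfl | rfl <;> grind

/-- The number of edges of `H` in block `t` of the wreath graph, between layers `t` and `t + 1`. -/
def blockFaults (H : SimpleGraph (Fin 6 × Fin 2)) [DecidableRel H.Adj] (t : Fin 6) : ℕ :=
  ∑ a, ∑ b, H.adjMatrix ℕ (t, a) (t + 1, b)

theorem sum_degree_layer (hH : H ≤ wreathGraph) (t : Fin 6) :
    ∑ a, H.degree (t, a) = blockFaults H t + blockFaults H (t - 1) := by
  simp only [degree_eq_sum_add_sum hH (Or.inl rfl), sum_add_distrib, blockFaults,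
    sub_add_cancel]
  rw [sum_comm (γ := Fin 2) (f := fun a b => H.adjMatrix ℕ (t, a) (t - 1, b))]
  simp only [adjMatrix_apply_comm (t, _)]

theorem sum_blockFaults (hH : H ≤ wreathGraph) :
    ∑ t, blockFaults H t = #H.edgeFinset := by
  have hshift : ∑ t, blockFaults H (t - 1) = ∑ t, blockFaults H t :=
    Equiv.sum_comp (Equiv.subRight 1) (blockFaults H)
  have hdeg := H.sum_degrees_eq_twice_card_edges
  simp only [Fintype.sum_prod_type, sum_degree_layer hH, sum_add_distrib, hshift] at hdeg
  lia

/-- The edges of the wreath graph outside `H` between light nodes, those of degree at most one in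
`H`. When `H` consists of the faults, these edges are surviving vertices joining two connected
4-cycles. -/
def lightGraph (H : SimpleGraph (Fin 6 × Fin 2)) [DecidableRel H.Adj] :
    SimpleGraph (Fin 6 × Fin 2) where
  Adj p q := wreathGraph.Adj p q ∧ ¬ H.Adj p q ∧ H.degree p ≤ 1 ∧ H.degree q ≤ 1
  symm := ⟨fun _ _ ⟨hW, hH, hp, hq⟩ => ⟨hW.symm, mt H.adj_symm hH, hq, hp⟩⟩
  loopless := ⟨fun _ h => wreathGraph.irrefl h.1⟩

theorem lightGraph_reachable_of_adj {p q : Fin 6 × Fin 2} (hpq : wreathGraph.Adj p q)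
    (hp : H.degree p ≤ 1) (hq : H.degree q ≤ 1) (hA : H.adjMatrix ℕ p q = 0) :
    (lightGraph H).Reachable p q :=
  SimpleGraph.Adj.reachable ⟨hpq, by simpa using hA, hp, hq⟩

theorem sum_blockFaults_shift (hH : H ≤ wreathGraph) (t : Fin 6) :
    blockFaults H t + blockFaults H (t + 1) + blockFaults H (t + 2) + blockFaults H (t + 3) +
      blockFaults H (t + 4) + blockFaults H (t + 5) = #H.edgeFinset := by
  rw [← sum_blockFaults hH, ← Equiv.sum_comp (Equiv.addLeft t), Fin.sum_univ_six]
  simp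

theorem sum_degree_adjacent_layers (hH : H ≤ wreathGraph) (t : Fin 6) :
    ∑ a, H.degree (t + 1, a) + ∑ a, H.degree (t - 1, a) =
      blockFaults H (t + 1) + blockFaults H t + blockFaults H (t + 5) + blockFaults H (t + 4) := by
  rw [sum_degree_layer hH, sum_degree_layer hH, show t + 1 - 1 = t by grind,
    show t - 1 = t + 5 by grind, show t + 5 - 1 = t + 4 by grind]
  ring

theorem exists_lightGraph_adj (hH : H ≤ wreathGraph) (hcard : #H.edgeFinset ≤ 6)
    {p : Fin 6 × Fin 2} (hp : H.degree p ≤ 1) : ∃ q, (lightGraph H).Adj p q := by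
  obtain ⟨t, a⟩ := p
  by_contra! hno
  have hcost (q) (hq : wreathGraph.Adj (t, a) q) : 2 ≤ H.degree q + H.adjMatrix ℕ (t, a) q := by
    have hle := adjMatrix_le_degree (H := H) q (t, a)
    have hnot := hno q
    rw [adjMatrix_apply_comm, SimpleGraph.adjMatrix_apply] at hle
    simp only [lightGraph, hq, hp, true_and, not_and] at hnot
    rw [SimpleGraph.adjMatrix_apply]
    split_ifs at hle ⊢ with h
    · lia
    · have := hnot h; lia
  have hnext b := hcost _ (wreathGraph_adj_next t a b)
  have hprev b := hcost _ (wreathGraph_adj_prev t a b)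
  have hdeg := degree_eq_sum_add_sum hH (Or.inl rfl) t a
  have hlayers := sum_degree_adjacent_layers hH t
  have htotal := sum_blockFaults_shift hH t
  simp only [Fin.forall_fin_two, Fin.sum_univ_two] at hnext hprev hdeg hlayers
  -- The four neighbours have total degree at least `8 - 1` in `H`, and share no edge of `H`.
  lia

theorem two_le_degree_add_of_not_reachable {p q d : Fin 6 × Fin 2} (hp : H.degree p ≤ 1)
    (hq : H.degree q ≤ 1) (hpd : wreathGraph.Adj p d) (hqd : wreathGraph.Adj q d)
    (hpq : ¬ (lightGraph H).Reachable p q) :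
    2 ≤ H.degree d + H.adjMatrix ℕ d p + H.adjMatrix ℕ d q := by
  have hd : H.degree d ≤ 1 → 1 ≤ H.adjMatrix ℕ d p + H.adjMatrix ℕ d q := by
    intro hd
    by_contra! h
    exact hpq <| (lightGraph_reachable_of_adj hpd.symm hd hp (by lia)).symm.trans
      (lightGraph_reachable_of_adj hqd.symm hd hq (by lia))
  have := adjMatrix_le_degree (H := H) d p
  have := adjMatrix_le_degree (H := H) d q
  lia

theorem blockFaults_eq_zero_of_not_reachable (hH : H ≤ wreathGraph) (hcard : #H.edgeFinset ≤ 6)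
    {t : Fin 6} (hp : H.degree (t, 0) ≤ 1) (hq : H.degree (t, 1) ≤ 1)
    (hpq : ¬ (lightGraph H).Reachable (t, 0) (t, 1)) :
    blockFaults H (t + 2) = 0 ∧ blockFaults H (t + 3) = 0 := by
  have hcost (d) (h₀ : wreathGraph.Adj (t, 0) d) (h₁ : wreathGraph.Adj (t, 1) d) :=
    two_le_degree_add_of_not_reachable hp hq h₀ h₁ hpq
  have hnext b := hcost _ (wreathGraph_adj_next t 0 b) (wreathGraph_adj_next t 1 b)
  have hprev b := hcost _ (wreathGraph_adj_prev t 0 b) (wreathGraph_adj_prev t 1 b)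
  have hdeg a := degree_eq_sum_add_sum hH (Or.inl rfl) t a
  have hlayers := sum_degree_adjacent_layers hH t
  have htotal := sum_blockFaults_shift hH t
  simp only [Fin.forall_fin_two, Fin.sum_univ_two] at hnext hprev hdeg hlayers
  simp only [adjMatrix_apply_comm (_, _) (t, _)] at hnext hprev
  -- The four neighbours have total degree at least `8 - 2` in `H`, which uses up all its edges.
  lia

theorem degree_antipode_eq_zero_of_not_reachable (hH : H ≤ wreathGraph)
    (hcard : #H.edgeFinset ≤ 6) {t : Fin 6} (hp : H.degree (t, 0) ≤ 1) (hq : H.degree (t, 1) ≤ 1)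
    (hpq : ¬ (lightGraph H).Reachable (t, 0) (t, 1)) (a : Fin 2) : H.degree (t + 3, a) = 0 := by
  obtain ⟨h₂, h₃⟩ := blockFaults_eq_zero_of_not_reachable hH hcard hp hq hpq
  have hlayer := sum_degree_layer hH (t + 3)
  rw [show t + 3 - 1 = t + 2 by grind, h₂, h₃] at hlayer
  exact sum_eq_zero_iff.1 hlayer a (mem_univ a)

theorem reachable_antipode_of_not_reachable (hH : H ≤ wreathGraph) (hcard : #H.edgeFinset ≤ 6)
    {t ε : Fin 6} {c : Fin 2} (hp : H.degree (t, 0) ≤ 1) (hq : H.degree (t, 1) ≤ 1)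
    (hpq : ¬ (lightGraph H).Reachable (t, 0) (t, 1)) (hε : ε = 1 ∨ ε = -1)
    (hd : H.degree (t + ε, c) ≤ 1) : (lightGraph H).Reachable (t + ε, c) (t + 3, 0) := by
  have hthree : t + ε + ε + ε = t + 3 := by rcases hε with rfl | rfl <;> grind
  have hantipode := degree_antipode_eq_zero_of_not_reachable hH hcard hp hq hpq
  have hfar (m b) : H.adjMatrix ℕ m (t + 3, b) = 0 := by
    rw [adjMatrix_apply_comm]
    exact Nat.le_zero.1 ((adjMatrix_le_degree _ _).trans_eq (hantipode b))
  have hnear (b) : H.adjMatrix ℕ (t + ε, c) (t + ε + ε, b) = 0 := by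
    have hfault := two_le_degree_add_of_not_reachable hp hq (wreathGraph_adj_add hε t 0 c)
      (wreathGraph_adj_add hε t 1 c) hpq
    have hdeg := degree_eq_sum_add_sum hH hε (t + ε) c
    simp only [add_sub_cancel_right, Fin.sum_univ_two] at hdeg
    -- The only edge of `H` at `(t + ε, c)` leads back to layer `t`.
    revert b
    rw [Fin.forall_fin_two]
    lia
  have hlight : H.degree (t + ε + ε, 0) ≤ 1 := by
    have hdeg := degree_eq_sum_add_sum hH hε (t + ε + ε) 0
    rw [hthree, add_sub_cancel_right, Fintype.sum_eq_zero _ (hfar _), zero_add,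
      Fintype.sum_eq_single (c + 1) fun b hb => ?_] at hdeg
    · exact hdeg.trans_le (adjMatrix_le_one _ _)
    · rw [show b = c by lia, adjMatrix_apply_comm, hnear]
  have hmid := lightGraph_reachable_of_adj (wreathGraph_adj_add hε (t + ε) c 0) hd hlight
    (hnear 0)
  have hend := wreathGraph_adj_add hε (t + ε + ε) 0 0
  rw [hthree] at hend
  exact hmid.trans
    (lightGraph_reachable_of_adj hend hlight ((hantipode 0).trans_le zero_le_one) (hfar _ 0))

theorem lightGraph_reachable_of_layer (hH : H ≤ wreathGraph) (hcard : #H.edgeFinset ≤ 6)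
    {t : Fin 6} (hp : H.degree (t, 0) ≤ 1) (hq : H.degree (t, 1) ≤ 1) :
    (lightGraph H).Reachable (t, 0) (t, 1) := by
  by_contra hpq
  have hout (a) (ha : H.degree (t, a) ≤ 1) : (lightGraph H).Reachable (t, a) (t + 3, 0) := by
    obtain ⟨⟨s, c⟩, hd⟩ := exists_lightGraph_adj hH hcard ha
    refine hd.reachable.trans ?_
    have hs : s = t + 1 ∨ s = t + -1 := by
      simpa only [sub_eq_add_neg] using wreathGraph_adj_iff.1 hd.1
    rcases hs with rfl | rfl
    · exact reachable_antipode_of_not_reachable hH hcard hp hq hpq (.inl rfl) hd.2.2.2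
    · exact reachable_antipode_of_not_reachable hH hcard hp hq hpq (.inr rfl) hd.2.2.2
  exact hpq ((hout 0 hp).trans (hout 1 hq).symm)

theorem lightGraph_reachable_of_same_layer (hH : H ≤ wreathGraph) (hcard : #H.edgeFinset ≤ 6)
    {t : Fin 6} {a b : Fin 2} (ha : H.degree (t, a) ≤ 1) (hb : H.degree (t, b) ≤ 1) :
    (lightGraph H).Reachable (t, a) (t, b) := by
  fin_cases a <;> fin_cases b
  · rfl
  · exact lightGraph_reachable_of_layer hH hcard ha hb
  · exact (lightGraph_reachable_of_layer hH hcard hb ha).symm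
  · rfl

/-- Block `t` is a break: some light nodes of layers `t` and `t + 1` lie in different components of
the light graph. -/
def IsBreak (H : SimpleGraph (Fin 6 × Fin 2)) [DecidableRel H.Adj] (t : Fin 6) : Prop :=
  ∃ a b, H.degree (t, a) ≤ 1 ∧ H.degree (t + 1, b) ≤ 1 ∧
    ¬ (lightGraph H).Reachable (t, a) (t + 1, b)

/-- Layer `t` is heavy: both its nodes have degree at least two in `H`, so that no path in the light
graph crosses it. -/
def IsHeavyLayer (H : SimpleGraph (Fin 6 × Fin 2)) [DecidableRel H.Adj] (t : Fin 6) : Prop :=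
  ∀ a, 2 ≤ H.degree (t, a)

theorem IsBreak.adj_of_light (hH : H ≤ wreathGraph) (hcard : #H.edgeFinset ≤ 6) {t : Fin 6}
    (ht : IsBreak H t) {a b : Fin 2} (ha : H.degree (t, a) ≤ 1) (hb : H.degree (t + 1, b) ≤ 1) :
    H.Adj (t, a) (t + 1, b) := by
  by_contra hadj
  obtain ⟨a', b', ha', hb', hno⟩ := ht
  refine hno ((lightGraph_reachable_of_same_layer hH hcard ha' ha).trans <| .trans ?_
    (lightGraph_reachable_of_same_layer hH hcard hb hb'))
  exact SimpleGraph.Adj.reachable ⟨wreathGraph_adj_next t a b, hadj, ha, hb⟩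

theorem IsBreak.two_le_degree (hH : H ≤ wreathGraph) (hcard : #H.edgeFinset ≤ 6) {t : Fin 6}
    (ht : IsBreak H t) {a b : Fin 2} (ha : H.degree (t, a) ≤ 1) (hb : H.degree (t + 1, b) ≤ 1) :
    2 ≤ H.degree (t, a + 1) ∧ 2 ≤ H.degree (t + 1, b + 1) := by
  have hab := ht.adj_of_light hH hcard ha hb
  refine ⟨by_contra fun h => ?_, by_contra fun h => ?_⟩
  · have h' := ht.adj_of_light hH hcard (Nat.le_of_lt_succ (not_le.1 h)) hb
    simpa using eq_of_adj_of_degree_le_one hb hab.symm h'.symm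
  · have h' := ht.adj_of_light hH hcard ha (Nat.le_of_lt_succ (not_le.1 h))
    simpa using eq_of_adj_of_degree_le_one ha hab h'

theorem IsBreak.blockFaults_bounds (hH : H ≤ wreathGraph) (hcard : #H.edgeFinset ≤ 6) {t : Fin 6}
    (ht : IsBreak H t) : 1 ≤ blockFaults H t ∧ blockFaults H t ≤ 2 ∧
      3 ≤ blockFaults H t + blockFaults H (t - 1) ∧
      3 ≤ blockFaults H (t + 1) + blockFaults H t := by
  obtain ⟨a, b, ha, hb, -⟩ := id ht
  have hab := ht.adj_of_light hH hcard ha hb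
  obtain ⟨ha', hb'⟩ := ht.two_le_degree hH hcard ha hb
  have hA : H.adjMatrix ℕ (t, a) (t + 1, b) = 1 := by simpa using hab
  have hA₁ : H.adjMatrix ℕ (t, a) (t + 1, b + 1) = 0 := by
    simpa using fun h => by simpa using eq_of_adj_of_degree_le_one ha hab h
  have hA₂ : H.adjMatrix ℕ (t, a + 1) (t + 1, b) = 0 := by
    simpa using fun h => by simpa using eq_of_adj_of_degree_le_one hb hab.symm h.symm
  have hA₃ := adjMatrix_le_one (H := H) (t, a + 1) (t + 1, b + 1)
  have hda : 1 ≤ H.degree (t, a) := (SimpleGraph.degree_pos_iff_exists_adj H _).2 ⟨_, hab⟩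
  have hdb : 1 ≤ H.degree (t + 1, b) :=
    (SimpleGraph.degree_pos_iff_exists_adj H _).2 ⟨_, hab.symm⟩
  have hblock : blockFaults H t = 1 + H.adjMatrix ℕ (t, a + 1) (t + 1, b + 1) := by
    rw [blockFaults, sum_fin_two_eq_add_succ _ a, sum_fin_two_eq_add_succ _ b,
      sum_fin_two_eq_add_succ _ b, hA, hA₁, hA₂, add_zero, zero_add]
  have hlayer := sum_degree_layer hH t
  have hlayer' := sum_degree_layer hH (t + 1)
  rw [sum_fin_two_eq_add_succ _ a] at hlayer
  rw [add_sub_cancel_right, sum_fin_two_eq_add_succ _ b] at hlayer'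
  lia

theorem IsBreak.not_isBreak_succ (hH : H ≤ wreathGraph) (hcard : #H.edgeFinset ≤ 6) {t : Fin 6}
    (ht : IsBreak H t) : ¬ IsBreak H (t + 1) := by
  intro hs
  obtain ⟨a, b, ha, hb, -⟩ := id ht
  obtain ⟨-, c, -, hc, -⟩ := id hs
  have := eq_of_adj_of_degree_le_one hb (ht.adj_of_light hH hcard ha hb).symm
    (hs.adj_of_light hH hcard hb hc)
  grind

theorem IsBreak.eq (hH : H ≤ wreathGraph) (hcard : #H.edgeFinset ≤ 6) {t s : Fin 6}
    (ht : IsBreak H t) (hs : IsBreak H s) : t = s := by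
  obtain ⟨j, rfl⟩ : ∃ j, s = t + j := ⟨s - t, by grind⟩
  have htotal := sum_blockFaults_shift hH t
  have htb := ht.blockFaults_bounds hH hcard
  have hsb := hs.blockFaults_bounds hH hcard
  rw [show t - 1 = t + 5 by grind] at htb
  simp only [add_sub_assoc, add_assoc t] at hsb
  fin_cases j
  · exact (add_zero t).symm
  · exact absurd hs (ht.not_isBreak_succ hH hcard)
  -- Two breaks at distance at least two require seven edges of `H`.
  · grind
  · grind
  · grind
  · exact absurd (by simpa [add_assoc] using ht) (hs.not_isBreak_succ hH hcard)

theorem IsHeavyLayer.four_le_blockFaults_add (hH : H ≤ wreathGraph) {t : Fin 6}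
    (ht : IsHeavyLayer H t) : 4 ≤ blockFaults H t + blockFaults H (t - 1) := by
  have h₀ := ht 0
  have h₁ := ht 1
  rw [← sum_degree_layer hH, Fin.sum_univ_two]
  lia

theorem IsHeavyLayer.eq_or_eq_add_one_or_eq_sub_one (hH : H ≤ wreathGraph)
    (hcard : #H.edgeFinset ≤ 6) {t s : Fin 6} (ht : IsHeavyLayer H t) (hs : IsHeavyLayer H s) :
    s = t ∨ s = t + 1 ∨ s = t - 1 := by
  obtain ⟨j, rfl⟩ : ∃ j, s = t + j := ⟨s - t, by grind⟩
  have htotal := sum_blockFaults_shift hH t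
  have htb := ht.four_le_blockFaults_add hH
  have hsb := hs.four_le_blockFaults_add hH
  rw [show t - 1 = t + 5 by grind] at htb ⊢
  simp only [add_sub_assoc] at hsb
  fin_cases j <;> grind

theorem IsHeavyLayer.eq_or_eq_add_one_of_isBreak (hH : H ≤ wreathGraph) (hcard : #H.edgeFinset ≤ 6)
    {t s : Fin 6} (ht : IsHeavyLayer H t) (hs : IsBreak H s) : t = s ∨ t = s + 1 := by
  obtain ⟨j, rfl⟩ : ∃ j, t = s + j := ⟨t - s, by grind⟩
  have htotal := sum_blockFaults_shift hH s
  have htb := ht.four_le_blockFaults_add hH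
  have hsb := hs.blockFaults_bounds hH hcard
  rw [show s - 1 = s + 5 by grind] at hsb
  simp only [add_sub_assoc] at htb
  fin_cases j <;> grind

theorem exists_block_forall_isBreak_forall_isHeavyLayer (hH : H ≤ wreathGraph)
    (hcard : #H.edgeFinset ≤ 6) :
    ∃ s, (∀ t, IsBreak H t → t = s) ∧ ∀ t, IsHeavyLayer H t → t = s ∨ t = s + 1 := by
  by_cases hbreak : ∃ s, IsBreak H s
  · obtain ⟨s, hs⟩ := hbreak
    exact ⟨s, fun t ht => ht.eq hH hcard hs, fun t ht => ht.eq_or_eq_add_one_of_isBreak hH hcard hs⟩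
  push Not at hbreak
  by_cases hheavy : ∃ t, IsHeavyLayer H t
  · obtain ⟨t, ht⟩ := hheavy
    by_cases ht' : IsHeavyLayer H (t + 1)
    · refine ⟨t, fun s hs => absurd hs (hbreak s), fun s hs => ?_⟩
      have := ht.eq_or_eq_add_one_or_eq_sub_one hH hcard hs
      have := ht'.eq_or_eq_add_one_or_eq_sub_one hH hcard hs
      grind
    · refine ⟨t - 1, fun s hs => absurd hs (hbreak s), fun s hs => ?_⟩
      rcases ht.eq_or_eq_add_one_or_eq_sub_one hH hcard hs with rfl | rfl | rfl
      · simp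
      · exact absurd hs ht'
      · simp
  · push Not at hheavy
    exact ⟨0, fun t ht => absurd ht (hbreak t), fun t ht => absurd ht (hheavy t)⟩

theorem lightGraph_reachable_of_light (hH : H ≤ wreathGraph) (hcard : #H.edgeFinset ≤ 6)
    {p q : Fin 6 × Fin 2} (hp : H.degree p ≤ 1) (hq : H.degree q ≤ 1) :
    (lightGraph H).Reachable p q := by
  obtain ⟨s, hbreak, hheavy⟩ := exists_block_forall_isBreak_forall_isHeavyLayer hH hcard
  have hlink (i : Fin 6) (hi : i ≠ 0) {a b : Fin 2} (ha : H.degree (s + i, a) ≤ 1)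
      (hb : H.degree (s + (i + 1), b) ≤ 1) :
      (lightGraph H).Reachable (s + i, a) (s + (i + 1), b) := by
    by_contra hno
    rw [← add_assoc] at hb hno
    exact hi (by simpa using hbreak (s + i) ⟨a, b, ha, hb, hno⟩)
  have hlight (i : Fin 6) (hi : ¬ (i = 0 ∨ i = 1)) : ∃ a, H.degree (s + i, a) ≤ 1 := by
    by_contra! hno
    exact hi (by simpa using hheavy (s + i) hno)
  obtain ⟨a₂, h₂⟩ := hlight 2 (by decide)
  obtain ⟨a₃, h₃⟩ := hlight 3 (by decide)
  obtain ⟨a₄, h₄⟩ := hlight 4 (by decide)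
  obtain ⟨a₅, h₅⟩ := hlight 5 (by decide)
  have r₃ := hlink 2 (by decide) h₂ h₃
  have r₄ := r₃.trans (hlink 3 (by decide) h₃ h₄)
  have r₅ := r₄.trans (hlink 4 (by decide) h₄ h₅)
  have hhub (i b) (hb : H.degree (s + i, b) ≤ 1) :
      (lightGraph H).Reachable (s + 2, a₂) (s + i, b) := by
    fin_cases i
    · exact r₅.trans (hlink 5 (by decide) h₅ hb)
    · exact (hlink 1 (by decide) hb h₂).symm
    · exact r₃.trans (hlink 2 (by decide) hb h₃).symm
    · exact hlink 2 (by decide) h₂ hb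
    · exact r₃.trans (hlink 3 (by decide) h₃ hb)
    · exact r₄.trans (hlink 4 (by decide) h₄ hb)
  obtain ⟨t, a⟩ := p
  obtain ⟨u, b⟩ := q
  obtain ⟨i, rfl⟩ : ∃ i, t = s + i := ⟨t - s, by grind⟩
  obtain ⟨j, rfl⟩ : ∃ j, u = s + j := ⟨u - s, by grind⟩
  exact (hhub i a hp).symm.trans (hhub j b hq)

end FaultGraph

/-- The nodes in the even layers, one colour class of the wreath graph. They encode the cosets of
`⟨(12), (34)⟩`. -/
def evenNodes : Finset (Fin 6 × Fin 2) := {0, 2, 4} ×ˢ univ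

/-- The nodes in the odd layers, one colour class of the wreath graph. They encode the cosets of
`⟨(23), (14)⟩`. -/
def oddNodes : Finset (Fin 6 × Fin 2) := {1, 3, 5} ×ˢ univ

theorem wreathGraph_isBipartiteWith : wreathGraph.IsBipartiteWith ↑evenNodes ↑oddNodes where
  disjoint := by
    rw [disjoint_coe]
    decide
  mem_of_adj := by
    simp only [wreathGraph_adj_iff, mem_coe]
    decide

theorem two_le_card_image_layer {f : Fin 6 → Fin 6} (hf : f.Injective)
    {K : Finset (Fin 6 × Fin 2)} (hK : 3 ≤ #K) : 2 ≤ #(K.image fun p => f p.1) := by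
  have hfib (j : Fin 6) : #{p ∈ K | f p.1 = j} ≤ 2 := by
    refine card_le_card_of_injOn (t := (univ : Finset (Fin 2))) Prod.snd (by simp) ?_
    intro p hp q hq hpq
    simp only [coe_filter, Set.mem_ofPred_eq] at hp hq
    exact Prod.ext (hf (hp.2.trans hq.2.symm)) hpq
  have := card_le_mul_card_image (f := fun p => f p.1) K 2 fun j _ => hfib j
  lia

theorem exists_not_wreathGraph_adj {K L : Finset (Fin 6 × Fin 2)} (hK : K ⊆ evenNodes)
    (hL : L ⊆ oddNodes) (hK3 : 3 ≤ #K) (hL3 : 3 ≤ #L) :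
    ∃ p ∈ K, ∃ q ∈ L, ¬ wreathGraph.Adj p q := by
  have hKodd : K.image (fun p => p.1 + 3) ⊆ {1, 3, 5} :=
    (image_subset_image hK).trans (by decide)
  have hLodd : L.image (fun p => p.1) ⊆ {1, 3, 5} := (image_subset_image hL).trans (by decide)
  have hcard := two_le_card_image_layer (add_left_injective 3) hK3
  have hcard' := two_le_card_image_layer Function.injective_id hL3
  -- Three even and three odd nodes meet some pair of antipodal layers, by the pigeonhole principle.
  have hcommon := inter_nonempty_of_card_lt_card_add_card hKodd hLodd
    (lt_of_lt_of_le (by decide) (add_le_add hcard hcard'))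
  obtain ⟨_, hj⟩ := hcommon
  simp only [mem_inter, mem_image] at hj
  obtain ⟨⟨p, hp, rfl⟩, q, hq, hpq⟩ := hj
  refine ⟨p, hp, q, hq, ?_⟩
  rw [wreathGraph_adj_iff, hpq]
  grind

theorem card_wreathGraph_interedges_lt {K L : Finset (Fin 6 × Fin 2)} (hK : K ⊆ evenNodes)
    (hL : L ⊆ oddNodes) (hK3 : 3 ≤ #K) (hL3 : 3 ≤ #L) :
    #(wreathGraph.interedges K L) < #K * #L := by
  obtain ⟨p, hp, q, hq, hpq⟩ := exists_not_wreathGraph_adj hK hL hK3 hL3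
  rw [← card_product]
  exact card_lt_card <| (filter_subset _ _).ssubset_of_mem_notMem (mk_mem_product hp hq)
    fun h => hpq ((SimpleGraph.mk_mem_interedges_iff _).1 h).2.2

theorem card_interedges_heavy_le_two {H : SimpleGraph (Fin 6 × Fin 2)} [DecidableRel H.Adj]
    (hH : H ≤ wreathGraph) (hcard : #H.edgeFinset ≤ 6) :
    #((wreathGraph \ H).interedges {p ∈ evenNodes | 2 ≤ H.degree p}
      {p ∈ oddNodes | 2 ≤ H.degree p}) ≤ 2 := by
  set K := {p ∈ evenNodes | 2 ≤ H.degree p}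
  set L := {p ∈ oddNodes | 2 ≤ H.degree p}
  have hKe : K ⊆ evenNodes := filter_subset _ _
  have hLo : L ⊆ oddNodes := filter_subset _ _
  have hbip : H.IsBipartiteWith ↑evenNodes ↑oddNodes :=
    ⟨wreathGraph_isBipartiteWith.disjoint,
      fun _ _ h => wreathGraph_isBipartiteWith.mem_of_adj (hH h)⟩
  have hdeg {T : Finset (Fin 6 × Fin 2)} (hT : ∀ p ∈ T, 2 ≤ H.degree p) :
      2 * #T ≤ ∑ p ∈ T, H.degree p := by
    rw [mul_comm, ← smul_eq_mul]
    exact card_nsmul_le_sum _ _ _ hT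
  have hKdeg := hdeg fun p (hp : p ∈ K) => (mem_filter.1 hp).2
  have hLdeg := hdeg fun p (hp : p ∈ L) => (mem_filter.1 hp).2
  have hKle : ∑ p ∈ K, H.degree p ≤ #H.edgeFinset :=
    (sum_le_sum_of_subset hKe).trans_eq (SimpleGraph.isBipartiteWith_sum_degrees_eq_card_edges hbip)
  have hLle : ∑ p ∈ L, H.degree p ≤ #H.edgeFinset :=
    (sum_le_sum_of_subset hLo).trans_eq
      (SimpleGraph.isBipartiteWith_sum_degrees_eq_card_edges' hbip)
  have hincl := sum_degree_add_sum_degree_le hbip hKe hLo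
  have hsplit := card_interedges_sdiff hH K L
  have hmul := wreathGraph.card_interedges_le_mul K L
  have hmul3 := card_wreathGraph_interedges_lt hKe hLo
  have hK3 : #K ≤ 3 := by lia
  have hL3 : #L ≤ 3 := by lia
  -- `#K * #L - (2 * #K + 2 * #L - 6) = (#K - 2) * (#L - 2) + 2` is at most `2` unless `K` and `L`
  -- both have at most one element or both have three.
  generalize #K = k at *
  generalize #L = l at *
  interval_cases k <;> interval_cases l <;> lia

section ModifiedBubbleSort

theorem MB_adj_mul_swap {n : ℕ} (g : Perm (Fin (n + 2))) (i : Fin (n + 2)) :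
    (MB (n + 2)).Adj g (g * swap i (i + 1)) := by
  rw [MB, SimpleGraph.fromRel_adj]
  refine ⟨?_, .inl ⟨i, ?_⟩⟩
  · simp [eq_comm (a := g), swap_eq_one_iff]
  · congr

theorem reachable_of_commuting_swaps {F L : Set (Perm (Fin 4))} (hF : (L ∩ F).Subsingleton)
    {g h : Perm (Fin 4)} (hg : g ∉ F) (hh : h ∉ F) (i : Fin 4)
    (hu : g * swap i (i + 1) ∈ L) (hv : g * swap (i + 2) (i + 3) ∈ L)
    (hgh : h = g ∨ h = g * swap i (i + 1) ∨ h = g * swap (i + 2) (i + 3) ∨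
      h = g * swap i (i + 1) * swap (i + 2) (i + 3)) :
    ((MB 4).induce Fᶜ).Reachable ⟨g, hg⟩ ⟨h, hh⟩ := by
  have hstep (x : Perm (Fin 4)) : (MB 4).Adj x (x * swap i (i + 1)) := MB_adj_mul_swap x i
  have hstep' (x : Perm (Fin 4)) : (MB 4).Adj x (x * swap (i + 2) (i + 3)) := by
    simpa [add_assoc] using MB_adj_mul_swap x (i + 2)
  have hne : ∀ i : Fin 4, swap i (i + 1) ≠ swap (i + 2) (i + 3) := by decide
  have hcomm : ∀ i : Fin 4,
      swap i (i + 1) * swap (i + 2) (i + 3) = swap (i + 2) (i + 3) * swap i (i + 1) := by decide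
  rcases hgh with rfl | rfl | rfl | rfl
  · rfl
  · exact (SimpleGraph.induce_adj.2 (hstep g)).reachable
  · exact (SimpleGraph.induce_adj.2 (hstep' g)).reachable
  · refine reachable_induce_compl_of_square hg hh (hstep g) (hstep' _) (hstep' g) ?_ ?_
    · rw [mul_assoc, hcomm, ← mul_assoc]
      exact hstep _
    · by_contra! ⟨huF, hvF⟩
      exact hne i (mul_left_cancel (hF ⟨hu, huF⟩ ⟨hv, hvF⟩))

/-- The node of the coset of `g` modulo `swap 0 1` and `swap 2 3`, determined by the set
`{g 0, g 1}`. The even layer `2p` records the partition `{{0, p}, {q, r}}` of `Fin 4` into this set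
and its complement; the second component tells whether the set contains `0`. -/
def rowNode (g : Perm (Fin 4)) : Fin 6 × Fin 2 :=
  (Fin.ofNat 6 (2 * ((g * (swap 0 1 * swap 2 3) * g⁻¹ : Perm (Fin 4)) 0).val),
    if g⁻¹ 0 = 0 ∨ g⁻¹ 0 = 1 then 0 else 1)

/-- The node of the coset of `g` modulo `swap 1 2` and `swap 3 0`, determined by the set
`{g 1, g 2}`. The shift by `3` puts the two kinds of cosets that belong to the same partition of
`Fin 4` on antipodal layers. -/
def colNode (g : Perm (Fin 4)) : Fin 6 × Fin 2 :=
  ((rowNode (g * finRotate 4)).1 + 3, (rowNode (g * finRotate 4)).2)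

/-- The edge of the wreath graph that encodes `g`, joining the two 4-cycles through `g`. -/
def cell (g : Perm (Fin 4)) : Sym2 (Fin 6 × Fin 2) := s(rowNode g, colNode g)

theorem rowNode_mem_evenNodes : ∀ g, rowNode g ∈ evenNodes := by
  decide +kernel

theorem colNode_mem_oddNodes : ∀ g, colNode g ∈ oddNodes := by
  decide +kernel

theorem wreathGraph_adj_rowNode_colNode : ∀ g, wreathGraph.Adj (rowNode g) (colNode g) := by
  decide +kernel

theorem cell_injective : Function.Injective cell := by
  unfold Function.Injective
  decide +kernel

theorem exists_cell_eq : ∀ {n m}, wreathGraph.Adj n m → ∃ g, cell g = s(n, m) := by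
  decide +kernel

theorem rowNode_mul_swap : ∀ g,
    rowNode (g * swap 0 1) = rowNode g ∧ rowNode (g * swap 2 3) = rowNode g := by
  decide +kernel

theorem colNode_mul_swap : ∀ g,
    colNode (g * swap 1 2) = colNode g ∧ colNode (g * swap 3 0) = colNode g := by
  decide +kernel

theorem eq_of_rowNode_eq : ∀ {g h}, rowNode g = rowNode h →
    h = g ∨ h = g * swap 0 1 ∨ h = g * swap 2 3 ∨ h = g * swap 0 1 * swap 2 3 := by
  decide +kernel

theorem eq_of_colNode_eq : ∀ {g h}, colNode g = colNode h →
    h = g ∨ h = g * swap 1 2 ∨ h = g * swap 3 0 ∨ h = g * swap 1 2 * swap 3 0 := by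
  decide +kernel

theorem reachable_of_mem_cell {F : Set (Perm (Fin 4))} {n : Fin 6 × Fin 2}
    (hF : ({g | n ∈ cell g} ∩ F).Subsingleton) {g h : Perm (Fin 4)} (hg : g ∉ F) (hh : h ∉ F)
    (hng : n ∈ cell g) (hnh : n ∈ cell h) :
    ((MB 4).induce Fᶜ).Reachable ⟨g, hg⟩ ⟨h, hh⟩ := by
  have hdisj := wreathGraph_isBipartiteWith.disjoint
  rcases Sym2.mem_iff.1 hng with rfl | rfl <;> rcases Sym2.mem_iff.1 hnh with hgh | hgh
  · exact reachable_of_commuting_swaps hF hg hh 0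
      (by simp [cell, rowNode_mul_swap]) (by simp [cell, rowNode_mul_swap]) (eq_of_rowNode_eq hgh)
  · exact (Set.disjoint_left.1 hdisj (rowNode_mem_evenNodes g)
      (hgh ▸ colNode_mem_oddNodes h)).elim
  · exact (Set.disjoint_left.1 hdisj (rowNode_mem_evenNodes h)
      (hgh ▸ colNode_mem_oddNodes g)).elim
  · exact reachable_of_commuting_swaps hF hg hh 1
      (by simp [cell, colNode_mul_swap]) (by simp [cell, colNode_mul_swap]) (eq_of_colNode_eq hgh)

/-- The subgraph of the wreath graph formed by the edges that encode the vertices in `F`. -/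
def faultGraph (F : Set (Perm (Fin 4))) : SimpleGraph (Fin 6 × Fin 2) :=
  SimpleGraph.fromEdgeSet (cell '' F)

noncomputable instance (F : Set (Perm (Fin 4))) : DecidableRel (faultGraph F).Adj :=
  Classical.decRel _

variable {F : Set (Perm (Fin 4))}

theorem faultGraph_adj_of_cell_eq {g : Perm (Fin 4)} (hg : g ∈ F) {n m : Fin 6 × Fin 2}
    (hnm : cell g = s(n, m)) : (faultGraph F).Adj n m := by
  refine (SimpleGraph.fromEdgeSet_adj _).2 ⟨⟨g, hg, hnm⟩, fun h => ?_⟩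
  have hadj : cell g ∈ wreathGraph.edgeSet := wreathGraph_adj_rowNode_colNode g
  rw [hnm, SimpleGraph.mem_edgeSet, h] at hadj
  exact wreathGraph.irrefl hadj

theorem faultGraph_adj_iff {n m : Fin 6 × Fin 2} :
    (faultGraph F).Adj n m ↔ ∃ g ∈ F, cell g = s(n, m) :=
  ⟨fun h => ((SimpleGraph.fromEdgeSet_adj _).1 h).1,
    fun ⟨_, hg, h⟩ => faultGraph_adj_of_cell_eq hg h⟩

theorem faultGraph_le_wreathGraph : faultGraph F ≤ wreathGraph := by
  intro n m h
  obtain ⟨g, -, hg⟩ := faultGraph_adj_iff.1 h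
  rw [← SimpleGraph.mem_edgeSet, ← hg]
  exact wreathGraph_adj_rowNode_colNode g

theorem card_edgeFinset_faultGraph_le : #(faultGraph F).edgeFinset ≤ F.ncard := by
  rw [← Set.ncard_coe_finset, SimpleGraph.coe_edgeFinset, faultGraph,
    SimpleGraph.edgeSet_fromEdgeSet]
  exact (Set.ncard_le_ncard Set.sdiff_subset).trans (Set.ncard_image_le (Set.toFinite F))

theorem subsingleton_of_degree_faultGraph_le_one {n : Fin 6 × Fin 2}
    (hn : (faultGraph F).degree n ≤ 1) : ({g | n ∈ cell g} ∩ F).Subsingleton := by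
  rintro g ⟨⟨m, hm⟩, hg⟩ h ⟨⟨k, hk⟩, hh⟩
  have := eq_of_adj_of_degree_le_one hn (faultGraph_adj_of_cell_eq hg hm)
    (faultGraph_adj_of_cell_eq hh hk)
  exact cell_injective (hm.trans (this ▸ hk.symm))

theorem reachable_of_light (hF : F.ncard ≤ 6) {g h : Perm (Fin 4)} (hg : g ∉ F) (hh : h ∉ F)
    {n m : Fin 6 × Fin 2} (hn : (faultGraph F).degree n ≤ 1) (hm : (faultGraph F).degree m ≤ 1)
    (hng : n ∈ cell g) (hmh : m ∈ cell h) :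
    ((MB 4).induce Fᶜ).Reachable ⟨g, hg⟩ ⟨h, hh⟩ := by
  obtain ⟨w⟩ := lightGraph_reachable_of_light faultGraph_le_wreathGraph
    (card_edgeFinset_faultGraph_le.trans hF) hn hm
  induction w generalizing g with
  | nil => exact reachable_of_mem_cell (subsingleton_of_degree_faultGraph_le_one hn) hg hh hng hmh
  | @cons n k m hnk _ ih =>
    obtain ⟨c, hc⟩ := exists_cell_eq hnk.1
    have hcF : c ∉ F := fun hcF => hnk.2.1 (faultGraph_adj_of_cell_eq hcF hc)
    have hgc := reachable_of_mem_cell (subsingleton_of_degree_faultGraph_le_one hn) hg hcF hng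
      (by simp [hc])
    exact hgc.trans (ih hcF hnk.2.2.2 hm (by simp [hc]) hmh)

/-- The surviving vertices both of whose 4-cycles contain at least two faults. -/
def heavyVertices (F : Set (Perm (Fin 4))) : Set (Perm (Fin 4)) :=
  {g | g ∉ F ∧ ∀ n ∈ cell g, 2 ≤ (faultGraph F).degree n}

theorem exists_mem_cell_degree_le_one {g : Perm (Fin 4)} (hg : g ∉ F)
    (hheavy : g ∉ heavyVertices F) : ∃ n ∈ cell g, (faultGraph F).degree n ≤ 1 := by
  by_contra! hno
  exact hheavy ⟨hg, hno⟩

theorem ncard_heavyVertices_le_two (hF : F.ncard ≤ 6) : (heavyVertices F).ncard ≤ 2 := by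
  have hle := card_interedges_heavy_le_two (faultGraph_le_wreathGraph (F := F))
    (card_edgeFinset_faultGraph_le.trans hF)
  rw [← Set.ncard_coe_finset] at hle
  refine (Set.ncard_le_ncard_of_injOn (fun g => (rowNode g, colNode g)) ?_ ?_).trans hle
  · rintro g ⟨hg, hheavy⟩
    refine mem_coe.2 ((SimpleGraph.mk_mem_interedges_iff _).2
      ⟨mem_filter.2 ⟨rowNode_mem_evenNodes g, hheavy _ (Sym2.mem_mk_left _ _)⟩,
        mem_filter.2 ⟨colNode_mem_oddNodes g, hheavy _ (Sym2.mem_mk_right _ _)⟩,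
        wreathGraph_adj_rowNode_colNode g, fun hfault => ?_⟩)
    obtain ⟨k, hk, hkg⟩ := faultGraph_adj_iff.1 hfault
    exact hg (cell_injective hkg ▸ hk)
  · intro g _ h _ hgh
    simp only [Prod.mk.injEq] at hgh
    exact cell_injective (by rw [cell, cell, hgh.1, hgh.2])

theorem sub_ncard_sub_two_le_ncard (hF : F.ncard ≤ 6) {T : Set (Perm (Fin 4))}
    (hT : ∀ g ∉ F, g ∉ heavyVertices F → g ∈ T) : 24 - F.ncard - 2 ≤ T.ncard := by
  have huniv : (F ∪ heavyVertices F ∪ T).ncard = 24 := by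
    rw [Set.eq_univ_of_forall (s := F ∪ heavyVertices F ∪ T) (by grind), Set.ncard_univ,
      Nat.card_perm, Nat.card_fin]
    rfl
  have hheavy := ncard_heavyVertices_le_two hF
  have hunion := Set.ncard_union_le (F ∪ heavyVertices F) T
  have hunion' := Set.ncard_union_le F (heavyVertices F)
  lia

end ModifiedBubbleSort

theorem stmt_13_general (F : Set (Equiv.Perm (Fin 4))) (hF : F.ncard ≤ 6) :
    ∃ C : ((MB 4).induce Fᶜ).ConnectedComponent, 24 - F.ncard - 2 ≤ C.supp.ncard := by
  obtain ⟨g, hg, hlight⟩ : ∃ g ∉ F, g ∉ heavyVertices F := by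
    by_contra! hno
    have := sub_ncard_sub_two_le_ncard hF (T := ∅) fun g hg hlight => hlight (hno g hg)
    rw [Set.ncard_empty] at this
    lia
  obtain ⟨n, hng, hn⟩ := exists_mem_cell_degree_le_one hg hlight
  refine ⟨((MB 4).induce Fᶜ).connectedComponentMk ⟨g, hg⟩, ?_⟩
  rw [← Set.ncard_image_of_injective _ Subtype.val_injective]
  refine sub_ncard_sub_two_le_ncard hF fun h hh hlight' => ?_
  obtain ⟨m, hmh, hm⟩ := exists_mem_cell_degree_le_one hh hlight'
  exact ⟨⟨h, hh⟩, SimpleGraph.ConnectedComponent.sound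
    (reachable_of_light hF hh hg hm hn hmh hng), rfl⟩

theorem stmt_13 (F : Set (Equiv.Perm (Fin 4))) (hF : F.ncard ≤ 6)
    (hdisc : ¬ ((MB 4).induce Fᶜ).Preconnected) :
    ∃ C : ((MB 4).induce Fᶜ).ConnectedComponent,
      24 - F.ncard - 2 ≤ C.supp.ncard :=
  stmt_13_general F hF
end

section
/- Let F ⊆ V(MB_4) with |F| ≤ 7. If MB_4 − F is disconnected, then MB_4 − F has a connected component C with |V(C)| ≥ 24 − |F| − 3. -/
/-! If every component were small, some union of components would split `MB 4 - F` into parts `S`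
and `T` with at least four vertices each, at least 17 in total, and no edge between them. Cut `S`
and `T` by parity. A nonempty set of `k ≤ 3` permutations of equal parity has at least `2k + 2`
neighbours, all among the twelve permutations of the other parity and none in the other part. These
inequalities exclude `|S| + |T| ≥ 17` except when the even and odd sizes are 1 and 4 for one part
and 4 and 8 for the other, up to exchanging parities. In that case the four vertices in the first
part are the neighbours of the single one, so they have eleven neighbours in total, leaving room for
only one vertex where there should be four. -/

open Finset Equiv
open scoped Pointwise

theorem exists_eq_triple_of_card_le_three {α : Type*} [DecidableEq α] {X : Finset α}
    (hX : X.Nonempty) (hcard : #X ≤ 3) : ∃ a b c, X = {a, b, c} := by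
  have hpos := hX.card_pos
  obtain h | h | h : #X = 1 ∨ #X = 2 ∨ #X = 3 := by omega
  · obtain ⟨a, rfl⟩ := card_eq_one.1 h
    exact ⟨a, a, a, by simp⟩
  · obtain ⟨a, b, -, rfl⟩ := card_eq_two.1 h
    exact ⟨a, b, b, by simp⟩
  · obtain ⟨a, b, c, -, -, -, rfl⟩ := card_eq_three.1 h
    exact ⟨a, b, c, rfl⟩

theorem exists_union_of_fibers_card_ge {W K : Type*} [Fintype W] [DecidableEq K] (f : W → K)
    {m : ℕ} (hW : 3 * m ≤ Fintype.card W + 2)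
    (hf : ∀ k, #{w | f w = k} + m ≤ Fintype.card W) :
    ∃ A : Finset K, m ≤ #{w | f w ∈ A} ∧ #{w | f w ∈ A} + m ≤ Fintype.card W := by
  by_cases hbig : ∃ k, m ≤ #{w | f w = k}
  · obtain ⟨k, hk⟩ := hbig
    exact ⟨{k}, by simpa using hk, by simpa using hf k⟩
  push Not at hbig
  have himage : m ≤ #{w | f w ∈ univ.image f} := by
    simp only [mem_image_of_mem f (mem_univ _), filter_true, card_univ]
    omega
  obtain ⟨A, hA⟩ := exists_minimal_of_wellFoundedLT
    (fun A : Finset K => m ≤ #{w | f w ∈ A}) ⟨_, himage⟩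
  refine ⟨A, hA.prop, ?_⟩
  obtain rfl | ⟨k, hk⟩ := A.eq_empty_or_nonempty
  · simp only [notMem_empty, filter_false, card_empty]
    omega
  have herase : #{w | f w ∈ A.erase k} < m :=
    not_le.1 (hA.not_prop_of_lt (erase_ssubset hk))
  have hunion : #{w | f w ∈ A} ≤ #{w | f w = k} + #{w | f w ∈ A.erase k} := by
    classical
    rw [← insert_erase hk]
    simpa only [mem_insert, filter_or, erase_insert_eq_erase, erase_idem] using card_union_le _ _
  have := hbig k
  omega

theorem exists_finset_card_ge_forall_not_adj {V : Type*} [Fintype V] [DecidableEq V]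
    (G : SimpleGraph V) {m : ℕ} (hV : 3 * m ≤ Fintype.card V + 2)
    (hG : ∀ C : G.ConnectedComponent, C.supp.ncard + m ≤ Fintype.card V) :
    ∃ S : Finset V, m ≤ #S ∧ m ≤ #Sᶜ ∧ ∀ s ∈ S, ∀ t ∈ Sᶜ, ¬ G.Adj s t := by
  classical
  obtain ⟨A, hA, hA'⟩ := exists_union_of_fibers_card_ge G.connectedComponentMk hV fun C => by
    have : C.supp = ({v | G.connectedComponentMk v = C} : Finset V) := by ext; simp
    simpa only [this, Set.ncard_coe_finset] using hG C
  refine ⟨univ.filter (G.connectedComponentMk · ∈ A), hA, ?_, fun s hs t ht hst => ?_⟩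
  · rw [card_compl]
    omega
  · rw [mem_compl, mem_filter_univ] at ht
    rw [mem_filter_univ, SimpleGraph.ConnectedComponent.eq.2 hst.reachable] at hs
    exact ht hs

namespace MB

/-- The cyclically adjacent transpositions, the connection set of the Cayley graph `MB n`. For
`2 ≤ n` the neighbourhood of a set `X` of vertices is the product set `X * generators n`. -/
def generators (n : ℕ) : Finset (Perm (Fin n)) :=
  univ.image fun i => swap i ⟨(i.val + 1) % n, Nat.mod_lt _ i.pos⟩

/-- The vertices in `S` of sign `ε`: the trace on `S` of one colour class of the bipartite graph
`MB n`. -/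
def parityPart {n : ℕ} (ε : ℤˣ) (S : Finset (Perm (Fin n))) : Finset (Perm (Fin n)) :=
  {g ∈ S | Perm.sign g = ε}

section

variable {n : ℕ} {S T : Finset (Perm (Fin n))}

theorem disjoint_mul_generators (hST : Disjoint S T)
    (hadj : ∀ s ∈ S, ∀ t ∈ T, ¬ (MB n).Adj s t) : Disjoint (S * generators n) T := by
  refine disjoint_left.2 fun t hSt ht => ?_
  obtain ⟨s, hs, a, ha, rfl⟩ := mem_mul.1 hSt
  obtain ⟨i, -, rfl⟩ := mem_image.1 ha
  exact hadj s hs _ ht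
    ((SimpleGraph.fromRel_adj _ _ _).2 ⟨disjoint_iff_ne.1 hST s hs _ ht, .inl ⟨i, rfl⟩⟩)

theorem sign_eq_neg_one_of_mem_generators (hn : 2 ≤ n) {a : Perm (Fin n)} (ha : a ∈ generators n) :
    Perm.sign a = -1 := by
  obtain ⟨i, -, rfl⟩ := mem_image.1 ha
  refine Perm.sign_swap fun h => ?_
  have hval : i.val = (i.val + 1) % n := congrArg Fin.val h
  obtain hlt | heq : i.val + 1 < n ∨ i.val + 1 = n := by omega
  · rw [Nat.mod_eq_of_lt hlt] at hval
    omega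
  · rw [heq, Nat.mod_self] at hval
    omega

theorem parityPart_mul_generators_subset (hn : 2 ≤ n) (ε : ℤˣ) (S : Finset (Perm (Fin n))) :
    parityPart ε S * generators n ⊆ parityPart (-ε) (S * generators n) := by
  refine mul_subset_iff.2 fun g hg a ha => ?_
  obtain ⟨hgS, hgε⟩ := mem_filter.1 hg
  refine mem_filter.2 ⟨mul_mem_mul hgS ha, ?_⟩
  rw [Perm.sign_mul, hgε, sign_eq_neg_one_of_mem_generators hn ha, mul_neg_one]

theorem card_parityPart_add_card_parityPart_neg (ε : ℤˣ) (S : Finset (Perm (Fin n))) :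
    #(parityPart ε S) + #(parityPart (-ε) S) = #S := by
  rw [← card_filter_add_card_filter_not (s := S) fun g => Perm.sign g = ε]
  simp only [parityPart, ← Int.units_ne_iff_eq_neg, ne_eq]

end

theorem card_parityPart_univ (ε : ℤˣ) : #(parityPart ε (univ : Finset (Perm (Fin 4)))) = 12 := by
  revert ε
  decide +kernel

theorem two_mul_card_add_two_le_of_sign_eq_one : ∀ g h : Perm (Fin 4),
    Perm.sign g = 1 → Perm.sign h = 1 → 2 * #{1, g, h} + 2 ≤ #({1, g, h} * generators 4) := by
  decide +kernel

theorem card_generators_mul_generators : #(generators 4 * generators 4) = 11 := by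
  decide +kernel

variable {S T : Finset (Perm (Fin 4))} {ε : ℤˣ}

theorem two_mul_card_triple_add_two_le {a b c : Perm (Fin 4)}
    (hab : Perm.sign a = Perm.sign b) (hac : Perm.sign a = Perm.sign c) :
    2 * #{a, b, c} + 2 ≤ #({a, b, c} * generators 4) := by
  have htranslate : ({a, b, c} : Finset (Perm (Fin 4))) = a • {1, a⁻¹ * b, a⁻¹ * c} := by
    simp [smul_finset_insert]
  rw [htranslate, smul_mul_assoc, card_smul_finset, card_smul_finset]
  apply two_mul_card_add_two_le_of_sign_eq_one <;> simp [← hab, ← hac]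

theorem two_mul_min_card_add_two_le (hS : (parityPart ε S).Nonempty) :
    2 * min #(parityPart ε S) 3 + 2 ≤ #(parityPart ε S * generators 4) := by
  obtain ⟨X, hXS, hX⟩ := exists_subset_card_eq (min_le_left #(parityPart ε S) 3)
  have hXne : X.Nonempty := card_pos.1 (by have := hS.card_pos; omega)
  obtain ⟨a, b, c, rfl⟩ := exists_eq_triple_of_card_le_three hXne (by omega)
  have hsign : ∀ g ∈ ({a, b, c} : Finset (Perm (Fin 4))), Perm.sign g = ε := fun g hg =>
    (mem_filter.1 (hXS hg)).2
  rw [← hX]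
  refine (two_mul_card_triple_add_two_le ?_ ?_).trans (card_le_card (mul_subset_mul_right hXS))
  · rw [hsign a (by simp), hsign b (by simp)]
  · rw [hsign a (by simp), hsign c (by simp)]

theorem card_parityPart_add_card_parityPart_le (hST : Disjoint S T) :
    #(parityPart ε S) + #(parityPart ε T) ≤ 12 := by
  have hdisj : Disjoint (parityPart ε S) (parityPart ε T) := disjoint_filter_filter hST
  rw [← card_parityPart_univ ε, ← card_union_of_disjoint hdisj]
  exact card_le_card
    (union_subset (filter_subset_filter _ (subset_univ S)) (filter_subset_filter _ (subset_univ T)))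

theorem card_parityPart_mul_generators_add_le (hST : Disjoint (S * generators 4) T) :
    #(parityPart ε S * generators 4) + #(parityPart (-ε) T) ≤ 12 :=
  (Nat.add_le_add_right (card_le_card (parityPart_mul_generators_subset (by norm_num) ε S)) _).trans
    (card_parityPart_add_card_parityPart_le hST)

theorem two_mul_min_card_add_card_le (hST : Disjoint (S * generators 4) T)
    (hS : 0 < #(parityPart ε S)) :
    2 * min #(parityPart ε S) 3 + #(parityPart (-ε) T) ≤ 10 := by
  have hexpand := two_mul_min_card_add_two_le (card_pos.1 hS)
  have hroom := card_parityPart_mul_generators_add_le (ε := ε) hST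
  omega

theorem parityPart_neg_eq_parityPart_mul_generators (hdisj : Disjoint S T)
    (hST : Disjoint (S * generators 4) T) (hS : 0 < #(parityPart ε S))
    (hS' : 4 ≤ #(parityPart (-ε) S)) (hT : 8 ≤ #(parityPart (-ε) T)) :
    parityPart (-ε) S = parityPart ε S * generators 4 := by
  have hroom : #(parityPart (-ε) (S ∪ S * generators 4)) ≤ 4 := by
    have := card_parityPart_add_card_parityPart_le (ε := -ε) (disjoint_union_left.2 ⟨hdisj, hST⟩)
    omega
  have hneighbors : 4 ≤ #(parityPart ε S * generators 4) := by
    have := two_mul_min_card_add_two_le (card_pos.1 hS)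
    omega
  have hsubset : parityPart (-ε) S ⊆ parityPart (-ε) (S ∪ S * generators 4) :=
    filter_subset_filter _ subset_union_left
  have hsubset' : parityPart ε S * generators 4 ⊆ parityPart (-ε) (S ∪ S * generators 4) :=
    (parityPart_mul_generators_subset (by norm_num) ε S).trans
      (filter_subset_filter _ subset_union_right)
  rw [eq_of_subset_of_card_le hsubset (hroom.trans hS'),
    eq_of_subset_of_card_le hsubset' (hroom.trans hneighbors)]

theorem card_parityPart_le_one (hdisj : Disjoint S T) (hST : Disjoint (S * generators 4) T)
    (hS : #(parityPart ε S) = 1) (hS' : 4 ≤ #(parityPart (-ε) S))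
    (hT : 8 ≤ #(parityPart (-ε) T)) : #(parityPart ε T) ≤ 1 := by
  obtain ⟨g, hg⟩ := card_eq_one.1 hS
  have hroom := card_parityPart_mul_generators_add_le (ε := -ε) hST
  rw [parityPart_neg_eq_parityPart_mul_generators hdisj hST (by omega) hS' hT, hg,
    mul_assoc, card_singleton_mul, card_generators_mul_generators, neg_neg] at hroom
  omega

theorem card_add_card_le_sixteen_of_parityPart_eq_empty (hdisj : Disjoint S T)
    (hST : Disjoint (S * generators 4) T) (hS : 4 ≤ #S) (hempty : parityPart ε S = ∅) :
    #S + #T ≤ 16 := by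
  have hcardS := card_parityPart_add_card_parityPart_neg ε S
  have hcardT := card_parityPart_add_card_parityPart_neg ε T
  have hroom := card_parityPart_add_card_parityPart_le (ε := -ε) hdisj
  have hexpand := two_mul_min_card_add_card_le (ε := -ε) hST
  rw [hempty, card_empty] at hcardS
  rw [neg_neg] at hexpand
  omega

theorem card_add_card_le_sixteen_of_card_parityPart_eq_one (hdisj : Disjoint S T)
    (hST : Disjoint (S * generators 4) T) (hS : 4 ≤ #S) (hone : #(parityPart ε S) = 1)
    (heq_eight : #(parityPart (-ε) T) = 8) : #S + #T ≤ 16 := by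
  have hcardS := card_parityPart_add_card_parityPart_neg ε S
  have hcardT := card_parityPart_add_card_parityPart_neg ε T
  have hroom := card_parityPart_add_card_parityPart_le (ε := -ε) hdisj
  have hexpand := two_mul_min_card_add_card_le (ε := -ε) hST
  have hball := card_parityPart_le_one hdisj hST hone
  rw [neg_neg] at hexpand
  omega

theorem card_parityPart_add_card_parityPart_neg_le_eight_or (hST : Disjoint (S * generators 4) T)
    (hTS : Disjoint (T * generators 4) S) (hS : (parityPart ε S).Nonempty)
    (hT : (parityPart (-ε) T).Nonempty) :
    #(parityPart ε S) + #(parityPart (-ε) T) ≤ 8 ∨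
      #(parityPart ε S) = 1 ∧ #(parityPart (-ε) T) = 8 ∨
      #(parityPart (-ε) T) = 1 ∧ #(parityPart ε S) = 8 := by
  have hexpandS := two_mul_min_card_add_card_le hST hS.card_pos
  have hexpandT := two_mul_min_card_add_card_le hTS hT.card_pos
  have hposS := hS.card_pos
  have hposT := hT.card_pos
  rw [neg_neg] at hexpandT
  omega

theorem card_add_card_le_sixteen (hdisj : Disjoint S T)
    (hadj : ∀ s ∈ S, ∀ t ∈ T, ¬ (MB 4).Adj s t) (hS : 4 ≤ #S) (hT : 4 ≤ #T) :
    #S + #T ≤ 16 := by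
  have hST := disjoint_mul_generators hdisj hadj
  have hTS := disjoint_mul_generators hdisj.symm fun t ht s hs hts => hadj s hs t ht hts.symm
  by_contra! hlarge
  have hSne (ε : ℤˣ) : (parityPart ε S).Nonempty := nonempty_iff_ne_empty.2 fun hempty =>
    hlarge.not_ge (card_add_card_le_sixteen_of_parityPart_eq_empty hdisj hST hS hempty)
  have hTne (ε : ℤˣ) : (parityPart ε T).Nonempty := nonempty_iff_ne_empty.2 fun hempty =>
    hlarge.not_ge (add_comm #S #T ▸
      card_add_card_le_sixteen_of_parityPart_eq_empty hdisj.symm hTS hT hempty)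
  have hle_eight (ε : ℤˣ) : #(parityPart ε S) + #(parityPart (-ε) T) ≤ 8 := by
    obtain hle | ⟨hone, heq_eight⟩ | ⟨hone, heq_eight⟩ :=
      card_parityPart_add_card_parityPart_neg_le_eight_or hST hTS (hSne ε) (hTne (-ε))
    · exact hle
    · have := card_add_card_le_sixteen_of_card_parityPart_eq_one hdisj hST hS hone heq_eight
      omega
    · rw [← neg_neg ε] at heq_eight
      have := card_add_card_le_sixteen_of_card_parityPart_eq_one hdisj.symm hTS hT hone heq_eight
      omega
  have hcardS := card_parityPart_add_card_parityPart_neg 1 S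
  have hcardT := card_parityPart_add_card_parityPart_neg 1 T
  have hodd := hle_eight (-1)
  have heven := hle_eight 1
  rw [neg_neg] at hodd
  omega

end MB

theorem stmt_14_general (F : Set (Equiv.Perm (Fin 4))) (hF : F.ncard ≤ 7) :
    ∃ C : ((MB 4).induce Fᶜ).ConnectedComponent,
      24 - F.ncard - 3 ≤ C.supp.ncard := by
  classical
  by_contra! hsmall
  have hcard : F.ncard + Fintype.card (Fᶜ : Set (Perm (Fin 4))) = 24 := by
    rw [← Nat.card_eq_fintype_card, Nat.card_coe_set_eq, Set.ncard_add_ncard_compl,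
      Nat.card_eq_fintype_card, Fintype.card_perm, Fintype.card_fin]
    rfl
  obtain ⟨S, hS, hT, hadj⟩ := exists_finset_card_ge_forall_not_adj ((MB 4).induce Fᶜ) (m := 4)
    (by omega) fun C => by have := hsmall C; omega
  have hle := MB.card_add_card_le_sixteen (S := S.map (.subtype _)) (T := Sᶜ.map (.subtype _))
    ((disjoint_map _).2 disjoint_compl_right) (by simpa using hadj) (by simpa) (by simpa)
  have htotal := card_add_card_compl S
  rw [card_map, card_map] at hle
  omega

theorem stmt_14 (F : Set (Equiv.Perm (Fin 4))) (hF : F.ncard ≤ 7)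
    (hdisc : ¬ ((MB 4).induce Fᶜ).Preconnected) :
    ∃ C : ((MB 4).induce Fᶜ).ConnectedComponent,
      24 - F.ncard - 3 ≤ C.supp.ncard :=
  stmt_14_general F hF
end
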